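/- arXiv:2309.15322 — 2 statements merged into one kernel-verified Lean document; each statement's English description precedes it below -/
import Mathlib

section
/- There exist constants C, c > 0 such that the following holds. If the partition is balanced, k ≥ 2, and n ≥ C·k²·p·(log n)¹²/(p−q)², then with probability at least 1 − c·n^{−2} over the choice of E, ‖E·M′‖_{2→∞} ≤ 6·10⁶·√(kp)·(log n)², where D := ψ(Ĝ) − ψ(G), F := ψ(G), F̂ := ψ(Ĝ), r := ⌈log n⌉, and M′ := Σ_{t=1}^{r−1} D^t · F · F̂^{r−1−t}. -/
open MeasureTheory ProbabilityTheory Matrix Finset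

namespace SBM

/-- Euclidean norm of a vector. -/
noncomputable def enorm {m : Type*} [Fintype m] (x : m → ℝ) : ℝ :=
  Real.sqrt (∑ i, x i ^ 2)

/-- Spectral (ℓ²-operator) norm of a matrix. -/
noncomputable def specNorm {n : ℕ} (A : Matrix (Fin n) (Fin n) ℝ) : ℝ :=
  ‖Matrix.toEuclideanCLM (𝕜 := ℝ) A‖

/-- The `2 → ∞` norm: maximal Euclidean norm of a row. -/
noncomputable def n2i {n : ℕ} (A : Matrix (Fin n) (Fin n) ℝ) : ℝ :=
  ⨆ i : Fin n, enorm (A i)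

/-- The mean matrix `G` of the SSBM with cluster assignment `cl`. -/
def meanMatrix (n k : ℕ) (p q : ℝ) (cl : Fin n → Fin k) : Matrix (Fin n) (Fin n) ℝ :=
  Matrix.of fun u v => if cl u = cl v then p else q

/-- The size of cluster `i`. -/
def clusterSize {n k : ℕ} (cl : Fin n → Fin k) (i : Fin k) : ℕ :=
  (Finset.univ.filter fun v => cl v = i).card

/-- The partition is balanced: every cluster size is within a `1 ± 1/(16 log n)` factor
of `n / k`. -/
noncomputable def Balanced (n k : ℕ) (cl : Fin n → Fin k) : Prop :=
  ∀ i : Fin k,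
    (1 - 1 / (16 * Real.log n)) * ((n : ℝ) / k) ≤ (clusterSize cl i : ℝ) ∧
    (clusterSize cl i : ℝ) ≤ (1 + 1 / (16 * Real.log n)) * ((n : ℝ) / k)

/-- `lam, v` is a spectral decomposition of `A`: eigenvalues in non-increasing order with
an orthonormal eigenbasis. -/
def IsSpectralDecomp {n : ℕ} (A : Matrix (Fin n) (Fin n) ℝ)
    (lam : Fin n → ℝ) (v : Fin n → Fin n → ℝ) : Prop :=
  Antitone lam ∧
  (∀ i j, dotProduct (v i) (v j) = if i = j then (1 : ℝ) else 0) ∧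
  A = ∑ i, lam i • Matrix.vecMulVec (v i) (v i)

/-- Orthogonal projection onto the span of the top `k` eigenvectors `v 0, …, v (k-1)`. -/
noncomputable def projTop {n : ℕ} (k : ℕ) (v : Fin n → Fin n → ℝ) :
    Matrix (Fin n) (Fin n) ℝ :=
  ∑ i ∈ Finset.univ.filter (fun i : Fin n => (i : ℕ) < k), Matrix.vecMulVec (v i) (v i)

/-- The column of `A` indexed by `u`. -/
def column {n : ℕ} (A : Matrix (Fin n) (Fin n) ℝ) (u : Fin n) : Fin n → ℝ :=
  fun i => A i u

/-- `ψ(M) = A·M² + B·M` where `A = -1/(λ₁μ)`, `B = 1/λ₁ + 1/μ`. -/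
noncomputable def psiM {n : ℕ} (lam1 mu : ℝ) (M : Matrix (Fin n) (Fin n) ℝ) :
    Matrix (Fin n) (Fin n) ℝ :=
  (-(1 / (lam1 * mu))) • (M * M) + (1 / lam1 + 1 / mu) • M

/-- `φ(M) = ψ(M)^r`. -/
noncomputable def phiM {n : ℕ} (lam1 mu : ℝ) (r : ℕ) (M : Matrix (Fin n) (Fin n) ℝ) :
    Matrix (Fin n) (Fin n) ℝ :=
  psiM lam1 mu M ^ r

/-- `ψ(t) = A·t² + B·t` where `A = -1/(λ₁μ)`, `B = 1/λ₁ + 1/μ`. -/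
noncomputable def psiR (lam1 mu t : ℝ) : ℝ :=
  (-(1 / (lam1 * mu))) * t ^ 2 + (1 / lam1 + 1 / mu) * t

/-- `φ(t) = ψ(t)^r`. -/
noncomputable def phiR (lam1 mu : ℝ) (r : ℕ) (t : ℝ) : ℝ := psiR lam1 mu t ^ r

end SBM

namespace SBM

/-- The SSBM noise model: `E` is a random symmetric matrix whose upper-triangular entries
are independent, with `E_{uv} = 1 − G_{uv}` with probability `G_{uv}` and
`E_{uv} = −G_{uv}` with probability `1 − G_{uv}`, where `G` is the mean matrix. -/
def NoiseModel {Ω : Type*} [MeasureSpace Ω] {n k : ℕ} (p q : ℝ) (cl : Fin n → Fin k)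
    (E : Ω → Matrix (Fin n) (Fin n) ℝ) : Prop :=
  (∀ ω, (E ω).IsSymm) ∧
  (∀ u v : Fin n, Measurable fun ω => E ω u v) ∧
  iIndepFun (m := fun _ : {e : Fin n × Fin n // e.1 ≤ e.2} => (inferInstance : MeasurableSpace ℝ))
    (fun e ω => E ω e.1.1 e.1.2) ℙ ∧
  (∀ u v : Fin n, u ≤ v →
    Measure.map (fun ω => E ω u v) ℙ =
      ENNReal.ofReal (meanMatrix n k p q cl u v) •
        Measure.dirac (1 - meanMatrix n k p q cl u v) +
      ENNReal.ofReal (1 - meanMatrix n k p q cl u v) •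
        Measure.dirac (-(meanMatrix n k p q cl u v)))

end SBM

namespace EMB

/-- Vertices other than the root are at most as many as the edges. -/
lemma card_vert_le {ι V T : Type*} [Fintype ι] [DecidableEq V] [DecidableEq T]
    (rank : ι → ℕ) (u : V) (x s : ι → V) (f : ι → T)
    (hs : ∀ i, s i = u ∨ ∃ j, rank j < rank i ∧ s i = x j)
    (hf : ∀ i i', f i = f i' → x i = x i' ∨ (x i = s i' ∧ s i = x i')) :
    ((Finset.univ.image x).erase u).card ≤ (Finset.univ.image f).card := by
  classical
  have hmin : ∀ y ∈ (Finset.univ.image x).erase u, ∃ i, x i = y ∧ ∀ j, x j = y → rank i ≤ rank j := by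
    intro y hy
    have hy2 : y ∈ Finset.univ.image x := Finset.mem_of_mem_erase hy
    obtain ⟨i0, -, hi0⟩ := Finset.mem_image.mp hy2
    obtain ⟨i, hi, hi'⟩ := Finset.exists_min_image (Finset.univ.filter fun i => x i = y) rank
      ⟨i0, by simp [hi0]⟩
    exact ⟨i, by simpa using hi, fun j hj => hi' j (by simp [hj])⟩
  rcases isEmpty_or_nonempty ι with hι | hι
  · simp
  choose! g hg1 hg2 using hmin
  apply Finset.card_le_card_of_injOn (fun y => f (g y))
  · intro y hy
    simp
  · intro y hy y' hy' h
    by_contra hne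
    rcases hf _ _ h with h1 | ⟨h1, h2⟩
    · rw [hg1 y hy, hg1 y' hy'] at h1; exact hne h1
    · rw [hg1 y hy] at h1
      rw [hg1 y' hy'] at h2
      have hyu : y ≠ u := Finset.ne_of_mem_erase hy
      have hyu' : y' ≠ u := Finset.ne_of_mem_erase hy'
      rcases hs (g y') with h3 | ⟨j, hj, h3⟩
      · exact hyu (h1.trans h3)
      rcases hs (g y) with h4 | ⟨j', hj', h4⟩
      · exact hyu' (h2.symm.trans h4)
      have := hg2 y hy j (by rw [← h3, ← h1])
      have := hg2 y' hy' j' (by rw [← h4, ← h2])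
      omega

lemma sum_patterns {ι V : Type*} [Fintype ι] [Fintype V] [DecidableEq ι] [DecidableEq V]
    (u : V) (h : ℕ) (p : ℝ) (hp : 0 ≤ p) (hnp : 1 ≤ (Fintype.card V : ℝ) * p) :
    ∑ x : ι → V, (if ((Finset.univ.image x).erase u).card ≤ h then
        p ^ ((Finset.univ.image x).erase u).card else 0) ≤
      ((Fintype.card V : ℝ) * p) ^ h * ((h : ℝ) + 1) ^ (Fintype.card ι + 1) := by
  classical
  have h1 : ∀ x ∈ (Finset.univ : Finset (ι → V)),
      (Finset.univ.image x).erase u ∈ (Finset.univ : Finset V).powerset := by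
    intro x _; simp
  rw [← Finset.sum_fiberwise_of_maps_to h1]
  have h2 : ∀ W ∈ (Finset.univ : Finset V).powerset,
      ∑ x ∈ (Finset.univ : Finset (ι → V)) with (Finset.univ.image x).erase u = W,
        (if ((Finset.univ.image x).erase u).card ≤ h then
        p ^ ((Finset.univ.image x).erase u).card else 0) ≤
      (fun v : ℕ => if v ≤ h then ((h : ℝ) + 1) ^ (Fintype.card ι) * p ^ v else 0) W.card := by
    intro W _
    have : ∀ x ∈ (Finset.univ : Finset (ι → V)).filter
        (fun x => (Finset.univ.image x).erase u = W),
        (if ((Finset.univ.image x).erase u).card ≤ h then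
        p ^ ((Finset.univ.image x).erase u).card else 0) = if W.card ≤ h then p ^ W.card else 0 := by
      intro x hx
      rw [(Finset.mem_filter.mp hx).2]
    rw [Finset.sum_congr rfl this, Finset.sum_const, nsmul_eq_mul]
    by_cases hW : W.card ≤ h
    · simp only [hW, if_true]
      apply mul_le_mul_of_nonneg_right _ (by positivity)
      have hsub : (Finset.univ : Finset (ι → V)).filter
        (fun x => (Finset.univ.image x).erase u = W) ⊆ Fintype.piFinset fun _ : ι => insert u W := by
        intro x hx
        rw [Fintype.mem_piFinset]
        intro i
        rw [← (Finset.mem_filter.mp hx).2]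
        by_cases hi : x i = u
        · simp [hi]
        · simp [hi]
      have hc := Finset.card_le_card hsub
      rw [Fintype.card_piFinset, Finset.prod_const, Finset.card_univ] at hc
      have hi : (insert u W).card ≤ h + 1 := (Finset.card_insert_le _ _).trans (by omega)
      have := hc.trans (Nat.pow_le_pow_left hi _)
      exact_mod_cast this
    · simp [hW]
  refine (Finset.sum_le_sum h2).trans ?_
  rw [Finset.sum_powerset_apply_card
    (fun v : ℕ => if v ≤ h then ((h : ℝ) + 1) ^ (Fintype.card ι) * p ^ v else 0)]
  have h3 : ∀ v ∈ Finset.range ((Finset.univ : Finset V).card + 1),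
      ((Finset.univ : Finset V).card).choose v •
        (if v ≤ h then ((h : ℝ) + 1) ^ (Fintype.card ι) * p ^ v else 0) ≤
      if v ≤ h then ((Fintype.card V : ℝ) * p) ^ h * ((h : ℝ) + 1) ^ (Fintype.card ι) else 0 := by
    intro v _
    by_cases hv : v ≤ h
    · simp only [hv, if_true, nsmul_eq_mul]
      have hc : (((Finset.univ : Finset V).card.choose v : ℕ) : ℝ) ≤ (Fintype.card V : ℝ) ^ v := by
        have := Nat.choose_le_pow (Fintype.card V) v
        exact_mod_cast this
      calc _ ≤ (Fintype.card V : ℝ) ^ v * (((h : ℝ) + 1) ^ (Fintype.card ι) * p ^ v) := by gcongr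
        _ = ((Fintype.card V : ℝ) * p) ^ v * ((h : ℝ) + 1) ^ (Fintype.card ι) := by
          rw [mul_pow]; ring
        _ ≤ _ := by gcongr
    · simp [hv]
  refine (Finset.sum_le_sum h3).trans ?_
  rw [← Finset.sum_filter, Finset.sum_const, nsmul_eq_mul]
  have hc : ((Finset.range ((Finset.univ : Finset V).card + 1)).filter (fun v => v ≤ h)).card
      ≤ h + 1 := by
    rw [← Finset.card_range (h + 1)]
    apply Finset.card_le_card
    intro v hv
    simp at hv ⊢; omega
  have hc' : (((Finset.range ((Finset.univ : Finset V).card + 1)).filter (fun v => v ≤ h)).card : ℝ)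
      ≤ h + 1 := by exact_mod_cast hc
  calc _ ≤ ((h : ℝ) + 1) * (((Fintype.card V : ℝ) * p) ^ h * ((h : ℝ) + 1) ^ (Fintype.card ι)) := by
        gcongr
    _ = _ := by ring

/-- Walk expansion. -/
lemma pow_mulVec_walk {V : Type*} [Fintype V] [DecidableEq V] (M : Matrix V V ℝ) (g : V → ℝ)
    (a : ℕ) : ∀ u, ((M ^ a) *ᵥ g) u = ∑ y : Fin a → V,
      (∏ i, M ((Fin.cons u y : Fin (a + 1) → V) i.castSucc) (y i)) *
        g ((Fin.cons u y : Fin (a + 1) → V) (Fin.last a)) := by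
  induction a with
  | zero => intro u; simp
  | succ a ih =>
    intro u
    rw [pow_succ', ← Matrix.mulVec_mulVec]
    simp only [Matrix.mulVec, dotProduct] at ih ⊢
    rw [← (Fin.consEquiv (fun _ : Fin (a + 1) => V)).sum_comp, Fintype.sum_prod_type]
    refine Finset.sum_congr rfl fun v _ => ?_
    rw [ih v, Finset.mul_sum]
    refine Finset.sum_congr rfl fun y _ => ?_
    rw [Fin.prod_univ_succ]
    simp [Fin.consEquiv, ← Fin.succ_last, mul_assoc]

/-- The moment bound on the product of independent centred variables. -/
lemma integral_prod_bound {Ω ι T : Type*} [MeasurableSpace Ω] (P : Measure Ω)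
    [IsProbabilityMeasure P] [Fintype ι] [Fintype T] [DecidableEq T] (Y : T → Ω → ℝ)
    (hind : iIndepFun Y P) (hm : ∀ t, Measurable (Y t)) (p : ℝ) (hp : 0 ≤ p)
    (h1 : ∀ t, ∫ ω, Y t ω ∂P = 0) (h2 : ∀ t, ∀ m, 2 ≤ m → |∫ ω, Y t ω ^ m ∂P| ≤ p)
    (f : ι → T) :
    |∫ ω, ∏ i, Y (f i) ω ∂P| ≤
      if 2 * (Finset.univ.image f).card ≤ Fintype.card ι then p ^ (Finset.univ.image f).card
        else 0 := by
  classical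
  set mult : T → ℕ := fun t => (Finset.univ.filter fun i => f i = t).card with hmult
  have e1 : ∀ ω, ∏ i, Y (f i) ω = ∏ t, (Y t ω) ^ mult t := by
    intro ω
    rw [← Finset.prod_fiberwise' Finset.univ f (fun t => Y t ω)]
    simp [hmult]
  have e2 : ∫ ω, ∏ i, Y (f i) ω ∂P = ∏ t, ∫ ω, (Y t ω) ^ mult t ∂P := by
    simp_rw [e1]
    exact hind.integral_fun_prod_comp (f := fun t z => z ^ mult t)
      (fun t => (hm t).aemeasurable) (fun t => by fun_prop)
  have hmem : ∀ t, t ∈ Finset.univ.image f ↔ mult t ≠ 0 := by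
    intro t
    simp [hmult]
  rw [e2]
  by_cases hone : ∃ t, mult t = 1
  · obtain ⟨t, ht⟩ := hone
    rw [Finset.prod_eq_zero (Finset.mem_univ t) (by simp [ht, h1])]
    simp only [abs_zero]
    split_ifs <;> positivity
  · push Not at hone
    have hc : 2 * (Finset.univ.image f).card ≤ Fintype.card ι := by
      have := Finset.card_eq_sum_card_fiberwise (s := (Finset.univ : Finset ι))
        (t := Finset.univ.image f) (f := f) (fun i _ => by simp)
      rw [← Finset.card_univ, this, mul_comm, ← smul_eq_mul]
      apply Finset.card_nsmul_le_sum
      intro t ht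
      have := (hmem t).mp ht
      have := hone t
      simp only [hmult] at *
      omega
    rw [if_pos hc, Finset.abs_prod, ← Finset.prod_const,
      ← Finset.prod_subset (Finset.subset_univ (Finset.univ.image f))]
    · apply Finset.prod_le_prod
      · intros; positivity
      · intro t ht
        apply h2
        have := (hmem t).mp ht
        have := hone t
        omega
    · intro t _ ht
      have : mult t = 0 := by by_contra h; exact ht ((hmem t).mpr h)
      simp [this]

end EMB
namespace EMB
open SBM

lemma mean_mem {n k : ℕ} {p q : ℝ} (hq : 0 ≤ q) (hpq : q < p) (cl : Fin n → Fin k) (u v : Fin n) :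
    0 ≤ meanMatrix n k p q cl u v ∧ meanMatrix n k p q cl u v ≤ p := by
  simp only [meanMatrix, Matrix.of_apply]
  split_ifs
  · exact ⟨by linarith, le_rfl⟩
  · exact ⟨hq, hpq.le⟩

section noise
set_option linter.unusedSectionVars false
variable {Ω : Type} [MeasureSpace Ω] [IsProbabilityMeasure (ℙ : Measure Ω)]
  {n k : ℕ} {p q : ℝ} {cl : Fin n → Fin k} {E : Ω → Matrix (Fin n) (Fin n) ℝ}

lemma noise_integral (hq : 0 ≤ q) (hpq : q < p) (hp : p ≤ 1) (hE : NoiseModel p q cl E)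
    (u v : Fin n) (huv : u ≤ v) (m : ℕ) :
    ∫ ω, (E ω u v) ^ m ∂(ℙ : Measure Ω) =
      meanMatrix n k p q cl u v * (1 - meanMatrix n k p q cl u v) ^ m +
      (1 - meanMatrix n k p q cl u v) * (-(meanMatrix n k p q cl u v)) ^ m := by
  obtain ⟨g0, g1⟩ := mean_mem hq hpq cl u v
  have hmap := hE.2.2.2 u v huv
  have : ∫ ω, (E ω u v) ^ m ∂(ℙ : Measure Ω) =
      ∫ z, z ^ m ∂(Measure.map (fun ω => E ω u v) (ℙ : Measure Ω)) := by
    rw [integral_map (hE.2.1 u v).aemeasurable (by fun_prop)]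
  rw [this, hmap, integral_add_measure, integral_smul_measure, integral_smul_measure,
    integral_dirac, integral_dirac, ENNReal.toReal_ofReal g0, ENNReal.toReal_ofReal (by linarith)]
  · simp
  · exact (integrable_dirac (by simp)).smul_measure ENNReal.ofReal_ne_top
  · exact (integrable_dirac (by simp)).smul_measure ENNReal.ofReal_ne_top

lemma noise_ae (hq : 0 ≤ q) (hpq : q < p) (hp : p ≤ 1) (hE : NoiseModel p q cl E)
    (u v : Fin n) : ∀ᵐ ω ∂(ℙ : Measure Ω), |E ω u v| ≤ 1 := by
  wlog huv : u ≤ v generalizing u v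
  · have := this v u (le_of_not_ge huv)
    filter_upwards [this] with ω hω
    rwa [(hE.1 ω).apply]
  obtain ⟨g0, g1⟩ := mean_mem hq hpq cl u v
  have hmap := hE.2.2.2 u v huv
  have hms : MeasurableSet {z : ℝ | |z| ≤ 1} := measurableSet_le (by fun_prop) (by fun_prop)
  have : ∀ᵐ z ∂(Measure.map (fun ω => E ω u v) (ℙ : Measure Ω)), |z| ≤ 1 := by
    rw [hmap, ae_add_measure_iff]
    constructor
    · apply Measure.ae_smul_measure
      rw [ae_dirac_iff hms]
      rw [abs_le]; constructor <;> linarith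
    · apply Measure.ae_smul_measure
      rw [ae_dirac_iff hms]
      rw [abs_le]; constructor <;> linarith
  exact (ae_map_iff (hE.2.1 u v).aemeasurable hms).mp this

/-- ordered edge -/
def edge (u v : Fin n) : {e : Fin n × Fin n // e.1 ≤ e.2} := ⟨(min u v, max u v), min_le_max⟩

lemma edge_eq (hE : NoiseModel p q cl E) (ω : Ω) (u v : Fin n) :
    E ω u v = E ω (edge u v).1.1 (edge u v).1.2 := by
  rcases le_total u v with h | h
  · simp [edge, h]
  · simp only [edge, h, min_eq_right, max_eq_left]
    rw [(hE.1 ω).apply]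

lemma edge_inj {u v u' v' : Fin n} (h : edge u v = edge u' v') :
    v = v' ∨ (v = u' ∧ u = v') := by
  simp only [edge, Subtype.mk.injEq, Prod.mk.injEq] at h
  obtain ⟨h1, h2⟩ := h
  rcases le_total u v with h3 | h3 <;> rcases le_total u' v' with h4 | h4 <;>
    simp only [h3, h4, min_eq_left, min_eq_right, max_eq_left, max_eq_right] at h1 h2 <;> tauto

lemma noise_moment {ι : Type} [Fintype ι] [DecidableEq ι] (hq : 0 ≤ q) (hpq : q < p) (hp : p ≤ 1)
    (hE : NoiseModel p q cl E) (hnp : 1 ≤ (n : ℝ) * p) (u : Fin n) (rank : ι → ℕ)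
    (h : ℕ) (hι : Fintype.card ι = 2 * h)
    (src : (ι → Fin n) → ι → Fin n)
    (hs : ∀ x i, src x i = u ∨ ∃ j, rank j < rank i ∧ src x i = x j) :
    ∑ x : ι → Fin n, |∫ ω, ∏ i, E ω (src x i) (x i) ∂(ℙ : Measure Ω)| ≤
      ((n : ℝ) * p) ^ h * ((h : ℝ) + 1) ^ (2 * h + 1) := by
  classical
  have hp0 : 0 ≤ p := by linarith
  have key := sum_patterns (ι := ι) u h p hp0 (by simpa using hnp)
  rw [hι] at key
  simp only [Fintype.card_fin] at key
  refine le_trans (Finset.sum_le_sum fun x _ => ?_) key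
  have hb := integral_prod_bound (ℙ : Measure Ω)
    (Y := fun (e : {e : Fin n × Fin n // e.1 ≤ e.2}) ω => E ω e.1.1 e.1.2) hE.2.2.1
    (fun t => hE.2.1 _ _) p hp0 (fun t => by
      have := noise_integral hq hpq hp hE t.1.1 t.1.2 t.2 1
      simp only [pow_one] at this
      rw [this]; ring) (fun t m hm => by
      rw [noise_integral hq hpq hp hE t.1.1 t.1.2 t.2 m]
      obtain ⟨g0, g1⟩ := mean_mem hq hpq cl t.1.1 t.1.2
      set g := meanMatrix n k p q cl t.1.1 t.1.2
      have g2 : 0 ≤ 1 - g := by linarith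
      have a1 : (1 - g) ^ m ≤ 1 - g := pow_le_of_le_one g2 (by linarith) (by omega)
      have a2 : g ^ m ≤ g := pow_le_of_le_one g0 (by linarith) (by omega)
      have a3 : g ^ m ≤ g ^ 2 := pow_le_pow_of_le_one g0 (by linarith) hm
      calc |g * (1 - g) ^ m + (1 - g) * (-g) ^ m| ≤ |g * (1 - g) ^ m| + |(1 - g) * (-g) ^ m| :=
            abs_add_le _ _
        _ = g * (1 - g) ^ m + (1 - g) * g ^ m := by
          rw [abs_mul, abs_mul, abs_pow, abs_pow, abs_neg, abs_of_nonneg g0, abs_of_nonneg g2]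
        _ ≤ g * (1 - g) + (1 - g) * g ^ 2 := by gcongr
        _ ≤ g := by nlinarith [mul_nonneg g0 g2, mul_nonneg g0 g0, mul_nonneg g0 (mul_nonneg g0 g0)]
        _ ≤ p := g1)
    (fun i => edge (src x i) (x i))
  have e1 : ∀ ω, ∏ i, E ω (src x i) (x i) =
      ∏ i, E ω (edge (src x i) (x i)).1.1 (edge (src x i) (x i)).1.2 := fun ω =>
    Finset.prod_congr rfl fun i _ => edge_eq hE ω _ _
  simp_rw [e1]
  refine hb.trans ?_
  have hv := card_vert_le rank u x (src x) (fun i => edge (src x i) (x i)) (hs x)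
    (fun i i' hii => edge_inj hii)
  rw [hι]
  by_cases hc : 2 * (Finset.univ.image fun i => edge (src x i) (x i)).card ≤ 2 * h
  · have hc' : ((Finset.univ.image x).erase u).card ≤ h := by
      have : (Finset.univ.image fun i => edge (src x i) (x i)).card ≤ h := by omega
      exact hv.trans this
    rw [if_pos hc, if_pos hc']
    exact pow_le_pow_of_le_one hp0 hp hv
  · rw [if_neg hc]
    split_ifs <;> positivity

/-- sum of squares of the walk sums -/
def X {κ : Type} [Fintype κ] [DecidableEq κ] (c : Fin n → κ) (M : Matrix (Fin n) (Fin n) ℝ)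
    (a : ℕ) (u : Fin n) : ℝ :=
  ∑ i : κ, (((M ^ a) *ᵥ (fun v => if c v = i then (1 : ℝ) else 0)) u) ^ 2

lemma X_nonneg {κ : Type} [Fintype κ] [DecidableEq κ] (c : Fin n → κ)
    (M : Matrix (Fin n) (Fin n) ℝ) (a : ℕ) (u : Fin n) : 0 ≤ X c M a u :=
  Finset.sum_nonneg fun _ _ => sq_nonneg _

/-- the weight of an `m`-tuple of pairs of walks -/
def wt {κ : Type} [Fintype κ] [DecidableEq κ] (c : Fin n → κ) (a : ℕ) (u : Fin n)
    (y : Fin 2 → Fin a → Fin n) : ℝ :=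
  ∑ i : κ, ∏ b : Fin 2,
    if c ((Fin.cons u (y b) : Fin (a + 1) → Fin n) (Fin.last a)) = i then (1 : ℝ) else 0

lemma wt_mem {κ : Type} [Fintype κ] [DecidableEq κ] (c : Fin n → κ) (a : ℕ) (u : Fin n)
    (y : Fin 2 → Fin a → Fin n) : 0 ≤ wt c a u y ∧ wt c a u y ≤ 1 := by
  constructor
  · exact Finset.sum_nonneg fun i _ => Finset.prod_nonneg fun b _ => by split_ifs <;> norm_num
  · unfold wt
    have : ∀ i ∈ (Finset.univ : Finset κ), (∏ b : Fin 2,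
      if c ((Fin.cons u (y b) : Fin (a + 1) → Fin n) (Fin.last a)) = i then (1 : ℝ) else 0) ≤
      if c ((Fin.cons u (y 0) : Fin (a + 1) → Fin n) (Fin.last a)) = i then (1 : ℝ) else 0 := by
      intro i _
      rw [Fin.prod_univ_two]
      split_ifs <;> norm_num
    refine (Finset.sum_le_sum this).trans ?_
    simp

lemma X_pow_eq {κ : Type} [Fintype κ] [DecidableEq κ] (c : Fin n → κ)
    (M : Matrix (Fin n) (Fin n) ℝ) (a : ℕ) (u : Fin n) (m : ℕ) :
    X c M a u ^ m = ∑ z : Fin m × Fin 2 × Fin a → Fin n,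
      (∏ j, wt c a u (fun b i => z (j, b, i))) *
      ∏ t : Fin m × Fin 2 × Fin a,
        M ((Fin.cons u (fun i => z (t.1, t.2.1, i)) : Fin (a + 1) → Fin n) t.2.2.castSucc) (z t) := by
  have h1 : X c M a u = ∑ y : Fin 2 → Fin a → Fin n, wt c a u y *
      ∏ b, ∏ i, M ((Fin.cons u (y b) : Fin (a + 1) → Fin n) i.castSucc) (y b i) := by
    unfold X wt
    simp_rw [pow_mulVec_walk, Fintype.sum_pow, Finset.sum_mul]
    rw [Finset.sum_comm]
    refine Finset.sum_congr rfl fun y _ => Finset.sum_congr rfl fun i _ => ?_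
    rw [Finset.prod_mul_distrib, mul_comm]
  rw [h1, Fintype.sum_pow]
  let e : (Fin m × Fin 2 × Fin a → Fin n) ≃ (Fin m → Fin 2 → Fin a → Fin n) :=
    (Equiv.curry (Fin m) (Fin 2 × Fin a) (Fin n)).trans
      (Equiv.arrowCongr (Equiv.refl _) (Equiv.curry (Fin 2) (Fin a) (Fin n)))
  rw [← e.sum_comp]
  refine Finset.sum_congr rfl fun z _ => ?_
  rw [Finset.prod_mul_distrib]
  congr 1
  simp_rw [Fintype.prod_prod_type]
  rfl

lemma prod_integrable {ι : Type} [Fintype ι] (hq : 0 ≤ q) (hpq : q < p) (hp : p ≤ 1)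
    (hE : NoiseModel p q cl E) (s t : ι → Fin n) :
    Integrable (fun ω => ∏ i, E ω (s i) (t i)) (ℙ : Measure Ω) := by
  refine Integrable.of_bound (C := 1) ?_ ?_
  · exact (Finset.measurable_prod _ fun i _ => hE.2.1 _ _).aestronglyMeasurable
  · have : ∀ᵐ ω ∂(ℙ : Measure Ω), ∀ i, |E ω (s i) (t i)| ≤ 1 :=
      ae_all_iff.mpr fun i => noise_ae hq hpq hp hE _ _
    filter_upwards [this] with ω hω
    rw [Real.norm_eq_abs, Finset.abs_prod]
    exact Finset.prod_le_one (fun _ _ => abs_nonneg _) fun i _ => hω i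

lemma X_pow_integrable {κ : Type} [Fintype κ] [DecidableEq κ] (hq : 0 ≤ q) (hpq : q < p)
    (hp : p ≤ 1) (hE : NoiseModel p q cl E) (c : Fin n → κ) (a : ℕ) (u : Fin n) (m : ℕ) :
    Integrable (fun ω => X c (E ω) a u ^ m) (ℙ : Measure Ω) := by
  simp_rw [X_pow_eq]
  exact integrable_finsetSum _ fun z _ => (prod_integrable hq hpq hp hE _ _).const_mul _

lemma X_moment {κ : Type} [Fintype κ] [DecidableEq κ] (hq : 0 ≤ q) (hpq : q < p) (hp : p ≤ 1)
    (hE : NoiseModel p q cl E) (hnp : 1 ≤ (n : ℝ) * p) (c : Fin n → κ)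
    (a : ℕ) (u : Fin n) (m : ℕ) :
    ∫ ω, X c (E ω) a u ^ m ∂(ℙ : Measure Ω) ≤
      ((n : ℝ) * p) ^ (a * m) * (((a * m : ℕ) : ℝ) + 1) ^ (2 * (a * m) + 1) := by
  simp_rw [X_pow_eq]
  rw [integral_finsetSum _ fun z _ => (prod_integrable hq hpq hp hE _ _).const_mul _]
  refine le_trans (Finset.sum_le_sum fun z _ => ?_)
    (noise_moment (ι := Fin m × Fin 2 × Fin a) hq hpq hp hE hnp u (fun t => (t.2.2 : ℕ)) (a * m)
      (by simp; ring)
      (fun z t => (Fin.cons u (fun i => z (t.1, t.2.1, i)) : Fin (a + 1) → Fin n) t.2.2.castSucc) ?_)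
  · rw [integral_const_mul]
    refine (le_abs_self _).trans ?_
    rw [abs_mul]
    refine mul_le_of_le_one_left (abs_nonneg _) ?_
    rw [Finset.abs_prod]
    refine Finset.prod_le_one (fun _ _ => abs_nonneg _) fun j _ => ?_
    rw [abs_of_nonneg (wt_mem c a u _).1]
    exact (wt_mem c a u _).2
  · rintro x ⟨j, b, i⟩
    obtain ⟨i, hi⟩ := i
    cases i with
    | zero => left; rfl
    | succ i =>
      right
      refine ⟨(j, b, ⟨i, by omega⟩), by simp, rfl⟩

lemma X_tail {κ : Type} [Fintype κ] [DecidableEq κ] (hq : 0 ≤ q) (hpq : q < p) (hp : p ≤ 1)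
    (hE : NoiseModel p q cl E) (hnp : 1 ≤ (n : ℝ) * p) (c : Fin n → κ)
    (a : ℕ) (u : Fin n) (l : ℝ) (hl : l = Real.log n) (hl4 : 4 ≤ l) (ha : 1 ≤ a)
    (ha2 : (a : ℝ) ≤ 2 * l + 2) :
    (ℙ : Measure Ω) {ω | ((50 * l) ^ 2 * (n * p)) ^ a < X c (E ω) a u} ≤
      ENNReal.ofReal (4 * l / (n : ℝ) ^ 5) := by
  have hn : (0 : ℝ) < n := by
    by_contra h
    have : (n : ℝ) = 0 := le_antisymm (not_lt.mp h) (by positivity)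
    rw [this] at hnp; norm_num at hnp
  set m := ⌈l / a⌉₊ with hm
  have ha0 : (0 : ℝ) < a := by exact_mod_cast ha
  have hm1 : l ≤ ((a * m : ℕ) : ℝ) := by
    have : l / a ≤ m := Nat.le_ceil _
    rw [div_le_iff₀ ha0] at this
    push_cast; linarith
  have hm2 : ((a * m : ℕ) : ℝ) + 1 ≤ 4 * l := by
    have : (m : ℝ) < l / a + 1 := Nat.ceil_lt_add_one (by positivity)
    have h2 : (a : ℝ) * m ≤ a * (l / a + 1) := by gcongr
    have h3 : (a : ℝ) * (l / a + 1) = l + a := by field_simp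
    push_cast; linarith
  have hmom := X_moment hq hpq hp hE hnp c a u m
  set h := a * m with hh
  set T : ℝ := ((50 * l) ^ 2 * (n * p)) with hT
  have hTpos : 0 < T := by positivity
  have hmarkov := mul_meas_ge_le_integral_of_nonneg (μ := (ℙ : Measure Ω))
    (f := fun ω => X c (E ω) a u ^ m)
    (Filter.Eventually.of_forall fun ω => pow_nonneg (X_nonneg _ _ _ _) _)
    (X_pow_integrable hq hpq hp hE c a u m) (T ^ h)
  have hsub : {ω | T ^ a < X c (E ω) a u} ⊆ {ω | T ^ h ≤ X c (E ω) a u ^ m} := by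
    intro ω hω
    simp only [Set.mem_ofPred_eq] at hω ⊢
    rw [hh, pow_mul]
    exact pow_le_pow_left₀ (by positivity) hω.le _
  refine (measure_mono hsub).trans ?_
  rw [ENNReal.le_ofReal_iff_toReal_le (measure_ne_top _ _) (by positivity)]
  change (ℙ : Measure Ω).real _ ≤ _
  have hE5 : Real.exp 5 ≤ 150 := by
    have h1 := Real.exp_one_lt_d9
    have : Real.exp 5 = Real.exp 1 ^ 5 := by rw [← Real.exp_nat_mul]; norm_num
    rw [this]
    calc Real.exp 1 ^ 5 ≤ 2.7182818286 ^ 5 := by gcongr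
      _ ≤ 150 := by norm_num
  have hn5 : (n : ℝ) ^ 5 ≤ Real.exp 5 ^ h := by
    rw [← Real.exp_log hn, ← hl, ← Real.exp_nat_mul, ← Real.exp_nat_mul]
    apply Real.exp_le_exp.mpr
    push_cast; nlinarith
  have hnp0 : 0 < (n : ℝ) * p := by linarith
  have hfin : ((n : ℝ) * p) ^ h * ((h : ℝ) + 1) ^ (2 * h + 1) * (n : ℝ) ^ 5 ≤ T ^ h * (4 * l) := by
    calc ((n : ℝ) * p) ^ h * ((h : ℝ) + 1) ^ (2 * h + 1) * (n : ℝ) ^ 5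
        ≤ ((n : ℝ) * p) ^ h * (4 * l) ^ (2 * h + 1) * Real.exp 5 ^ h := by gcongr
      _ = ((n * p) * ((4 * l) ^ 2 * Real.exp 5)) ^ h * (4 * l) := by
          rw [pow_succ (4 * l), pow_mul (4 * l) 2 h, mul_pow (n * p) _ h, mul_pow ((4 * l) ^ 2) _ h]
          generalize ((n : ℝ) * p) ^ h = A1
          generalize ((4 * l) ^ 2) ^ h = A2
          ring
      _ ≤ T ^ h * (4 * l) := by
          gcongr
          rw [hT, mul_comm]
          apply mul_le_mul_of_nonneg_right _ hnp0.le
          nlinarith [sq_nonneg l]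
  have hTh : 0 < T ^ h := by positivity
  rw [le_div_iff₀ (by positivity)]
  have := hmarkov.trans hmom
  have h6 : T ^ h * ((ℙ : Measure Ω).real {ω | T ^ h ≤ X c (E ω) a u ^ m} * (n : ℝ) ^ 5) ≤
      T ^ h * (4 * l) := by
    calc _ = T ^ h * (ℙ : Measure Ω).real {ω | T ^ h ≤ X c (E ω) a u ^ m} * (n : ℝ) ^ 5 := by ring
      _ ≤ _ := by gcongr
      _ ≤ _ := hfin
  exact le_of_mul_le_mul_left h6 hTh

end noise
end EMB
namespace EMB
open SBM
open scoped Matrix.Norms.L2Operator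

section det
variable {n : ℕ}

lemma enorm_eq (x : Fin n → ℝ) : SBM.enorm x = ‖(WithLp.toLp 2 x : EuclideanSpace ℝ (Fin n))‖ := by
  rw [EuclideanSpace.norm_eq]; simp [SBM.enorm]

lemma enorm_nonneg (x : Fin n → ℝ) : 0 ≤ SBM.enorm x := Real.sqrt_nonneg _

lemma enorm_sq (x : Fin n → ℝ) : SBM.enorm x ^ 2 = ∑ i, x i ^ 2 :=
  Real.sq_sqrt (Finset.sum_nonneg fun _ _ => sq_nonneg _)

lemma enorm_add (A B : Matrix (Fin n) (Fin n) ℝ) (u : Fin n) :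
    SBM.enorm ((A + B) u) ≤ SBM.enorm (A u) + SBM.enorm (B u) := by
  simp only [enorm_eq]
  exact norm_add_le (WithLp.toLp 2 (A u) : EuclideanSpace ℝ (Fin n)) (WithLp.toLp 2 (B u))

lemma enorm_smul (c : ℝ) (A : Matrix (Fin n) (Fin n) ℝ) (u : Fin n) :
    SBM.enorm ((c • A) u) = |c| * SBM.enorm (A u) := by
  simp only [enorm_eq]
  exact norm_smul c (WithLp.toLp 2 (A u) : EuclideanSpace ℝ (Fin n))

lemma enorm_sum {ι : Type*} (s : Finset ι) (A : ι → Matrix (Fin n) (Fin n) ℝ) (u : Fin n) :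
    SBM.enorm ((∑ t ∈ s, A t) u) ≤ ∑ t ∈ s, SBM.enorm (A t u) := by
  classical
  induction s using Finset.induction_on with
  | empty => simp [SBM.enorm]
  | insert a s ha ih =>
    rw [Finset.sum_insert ha, Finset.sum_insert ha]
    exact (enorm_add _ _ _).trans (by linarith)

lemma norm_transpose (B : Matrix (Fin n) (Fin n) ℝ) : ‖Bᵀ‖ = ‖B‖ := by
  have := Matrix.l2_opNorm_conjTranspose B
  rwa [Matrix.conjTranspose_eq_transpose_of_trivial] at this

lemma enorm_mul (A B : Matrix (Fin n) (Fin n) ℝ) (u : Fin n) :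
    SBM.enorm ((A * B) u) ≤ SBM.enorm (A u) * ‖B‖ := by
  have h : (A * B) u = Bᵀ *ᵥ (A u) := by
    rw [Matrix.mulVec_transpose]
    rfl
  rw [h, enorm_eq, enorm_eq, ← norm_transpose B, mul_comm]
  exact Matrix.l2_opNorm_mulVec Bᵀ (WithLp.toLp 2 (A u))

lemma norm_sq_le (A : Matrix (Fin n) (Fin n) ℝ) : ‖A‖ ^ 2 ≤ ∑ u, SBM.enorm (A u) ^ 2 := by
  have h : ‖A‖ ≤ Real.sqrt (∑ u, SBM.enorm (A u) ^ 2) := by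
    rw [Matrix.cstar_norm_def]
    refine ContinuousLinearMap.opNorm_le_bound _ (Real.sqrt_nonneg _) fun x => ?_
    rw [EuclideanSpace.norm_eq, EuclideanSpace.norm_eq, ← Real.sqrt_mul (by positivity)]
    apply Real.sqrt_le_sqrt
    rw [Finset.sum_mul]
    refine Finset.sum_le_sum fun u _ => ?_
    rw [enorm_sq]
    simp only [Real.norm_eq_abs, sq_abs]
    rw [Matrix.ofLp_toEuclideanCLM]
    have := Finset.sum_mul_sq_le_sq_mul_sq (R := ℝ) Finset.univ (A u) x.ofLp
    exact this
  calc ‖A‖ ^ 2 ≤ Real.sqrt (∑ u, SBM.enorm (A u) ^ 2) ^ 2 := by gcongr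
    _ = _ := Real.sq_sqrt (by positivity)

lemma norm_pow_le (M : Matrix (Fin n) (Fin n) ℝ) (hM : M.IsSymm) (a : ℕ) (ha1 : 1 ≤ a) : ‖M‖ ^ a ≤ ‖M ^ a‖ := by
  have hsa : IsSelfAdjoint M := by
    rw [isSelfAdjoint_iff, Matrix.star_eq_conjTranspose,
      Matrix.conjTranspose_eq_transpose_of_trivial]
    exact hM
  have h1 := hsa.norm_pow_two_pow a
  have ha : a ≤ 2 ^ a := Nat.lt_two_pow_self.le
  rcases eq_or_lt_of_le (norm_nonneg M) with h0 | h0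
  · rw [← h0, zero_pow (by omega)]; exact norm_nonneg _
  · have h2 : ‖M‖ ^ (2 ^ a) ≤ ‖M ^ a‖ * ‖M‖ ^ (2 ^ a - a) := by
      rw [← h1]
      nth_rewrite 1 [← Nat.add_sub_cancel' ha]
      rw [pow_add]
      refine (norm_mul_le _ _).trans ?_
      gcongr
      rcases Nat.eq_zero_or_pos (2 ^ a - a) with h | h
      · exfalso
        have := Nat.lt_two_pow_self (n := a); omega
      · exact norm_pow_le' _ h
    nth_rewrite 1 [← Nat.add_sub_cancel' ha] at h2
    rw [pow_add] at h2
    exact le_of_mul_le_mul_right h2 (by positivity)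

lemma X_id_eq (M : Matrix (Fin n) (Fin n) ℝ) (a : ℕ) (u : Fin n) :
    X (id : Fin n → Fin n) M a u = SBM.enorm ((M ^ a) u) ^ 2 := by
  rw [enorm_sq]
  unfold X
  refine Finset.sum_congr rfl fun i _ => ?_
  simp [Matrix.mulVec, dotProduct]

lemma psi_diff (l1 mu : ℝ) (G E : Matrix (Fin n) (Fin n) ℝ) :
    psiM l1 mu (G + E) - psiM l1 mu G =
      (-(1 / (l1 * mu))) • (G * E + E * G + E * E) + (1 / l1 + 1 / mu) • E := by
  unfold psiM
  rw [show (G + E) * (G + E) = G * G + (G * E + E * G + E * E) by noncomm_ring]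
  module

lemma det_D (l1 mu τ : ℝ) (G E : Matrix (Fin n) (Fin n) ℝ) (hmu : 0 < mu) (hl : mu ≤ l1)
    (hG : ‖G‖ ≤ l1) (hE : ‖E‖ ≤ 2 * τ) (hτ0 : 0 ≤ τ) (hτ : 2 * τ ≤ mu) :
    ‖psiM l1 mu (G + E) - psiM l1 mu G‖ ≤ 10 * (τ / mu) := by
  have hl0 : 0 < l1 := by linarith
  rw [psi_diff]
  have h1 : ‖G * E + E * G + E * E‖ ≤ l1 * (2 * τ) + (2 * τ) * l1 + (2 * τ) * (2 * τ) := by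
    refine (norm_add_le _ _).trans (add_le_add ((norm_add_le _ _).trans (add_le_add ?_ ?_)) ?_)
    all_goals
      refine (norm_mul_le _ _).trans ?_
      gcongr
  refine (norm_add_le _ _).trans ?_
  rw [norm_smul, norm_smul, norm_neg, Real.norm_of_nonneg (by positivity),
    Real.norm_of_nonneg (by positivity)]
  calc _ ≤ 1 / (l1 * mu) * (l1 * (2 * τ) + (2 * τ) * l1 + (2 * τ) * (2 * τ))
        + (1 / l1 + 1 / mu) * (2 * τ) := by gcongr
    _ ≤ 1 / (l1 * mu) * (l1 * (2 * τ) + (2 * τ) * l1 + mu * τ * 2)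
        + (1 / mu + 1 / mu) * (2 * τ) := by
        have : 2 * τ * (2 * τ) ≤ mu * τ * 2 := by nlinarith
        gcongr
    _ = 8 * (τ / mu) + 2 * (τ / l1) := by field_simp; ring
    _ ≤ 8 * (τ / mu) + 2 * (τ / mu) := by gcongr
    _ = _ := by ring

lemma det_row (l1 mu τ β : ℝ) (G E Pi : Matrix (Fin n) (Fin n) ℝ) (R : ℕ) (u : Fin n)
    (hmu : 0 < mu) (hl : mu ≤ l1) (hPG : Pi * G = G)
    (hG : ‖G‖ ≤ l1) (hE : ‖E‖ ≤ 2 * τ) (hτ0 : 0 ≤ τ) (hτ : 2 * τ ≤ mu) (hβ : 0 ≤ β)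
    (hrow : ∀ a ≤ R, SBM.enorm ((E ^ a * Pi) u) ≤ β * τ ^ a) :
    ∀ t a, a + 2 * t ≤ R →
      SBM.enorm ((E ^ a * ((psiM l1 mu (G + E) - psiM l1 mu G) ^ t * psiM l1 mu G)) u) ≤
        β * τ ^ a * (10 * (τ / mu)) ^ t * ‖psiM l1 mu G‖ := by
  have hl0 : 0 < l1 := by linarith
  set D := psiM l1 mu (G + E) - psiM l1 mu G with hD
  have hDn : ‖D‖ ≤ 10 * (τ / mu) := det_D l1 mu τ G E hmu hl hG hE hτ0 hτ
  have hDe := psi_diff l1 mu G E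
  rw [← hD] at hDe
  set F := psiM l1 mu G with hF
  have hPF : Pi * F = F := by
    rw [hF, psiM, mul_add, Matrix.mul_smul, Matrix.mul_smul, ← mul_assoc, hPG]
  set ε := τ / mu with hε
  have hε0 : 0 ≤ ε := by positivity
  have hε1 : 2 * ε ≤ 1 := by rw [hε, ← mul_div_assoc, div_le_one hmu]; exact hτ
  have hDF : ∀ t, ‖D ^ t * F‖ ≤ (10 * ε) ^ t * ‖F‖ := by
    intro t
    induction t with
    | zero => simp
    | succ t ih =>
      rw [pow_succ', mul_assoc]
      refine (norm_mul_le _ _).trans ?_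
      calc ‖D‖ * ‖D ^ t * F‖ ≤ (10 * ε) * ((10 * ε) ^ t * ‖F‖) := by gcongr
        _ = _ := by ring
  intro t
  induction t with
  | zero =>
    intro a ha
    rw [pow_zero, one_mul, ← hPF, ← mul_assoc, hPF]
    refine (enorm_mul _ _ _).trans ?_
    rw [pow_zero, mul_one]
    gcongr
    exact hrow a (by omega)
  | succ t ih =>
    intro a ha
    set Z := D ^ t * F with hZ
    have hZn : ‖Z‖ ≤ (10 * ε) ^ t * ‖F‖ := hDF t
    have e : E ^ a * (D ^ (t + 1) * F) =
        (-(1 / (l1 * mu))) • ((E ^ a * Pi) * (G * E * Z)) +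
        (-(1 / (l1 * mu))) • ((E ^ (a + 1) * Pi) * (G * Z)) +
        (-(1 / (l1 * mu))) • (E ^ (a + 2) * Z) +
        (1 / l1 + 1 / mu) • (E ^ (a + 1) * Z) := by
      have g1 : (E ^ a * Pi) * (G * E * Z) = E ^ a * (G * E * Z) := by
        rw [mul_assoc, mul_assoc G, ← mul_assoc Pi, hPG]
      have g2 : (E ^ (a + 1) * Pi) * (G * Z) = E ^ a * (E * G * Z) := by
        rw [mul_assoc, ← mul_assoc Pi, hPG, pow_succ]; simp only [mul_assoc]
      have g3 : E ^ (a + 2) * Z = E ^ a * (E * E * Z) := by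
        rw [pow_succ, pow_succ]; simp only [mul_assoc]
      have g4 : E ^ (a + 1) * Z = E ^ a * (E * Z) := by
        rw [pow_succ]; simp only [mul_assoc]
      have g5 : D ^ (t + 1) * F = D * Z := by rw [pow_succ', mul_assoc]
      rw [g1, g2, g3, g4, g5, hDe]
      simp only [add_mul, mul_add, Matrix.smul_mul, Matrix.mul_smul, smul_add]
    have i1 := ih (a + 1) (by omega)
    have i2 := ih (a + 2) (by omega)
    have r0 := hrow a (by omega)
    have r1 := hrow (a + 1) (by omega)
    have n1 : SBM.enorm (((E ^ a * Pi) * (G * E * Z)) u) ≤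
        (β * τ ^ a) * (l1 * (2 * τ) * ((10 * ε) ^ t * ‖F‖)) := by
      refine (enorm_mul _ _ _).trans ?_
      gcongr
      refine (norm_mul_le _ _).trans ?_
      gcongr
      refine (norm_mul_le _ _).trans ?_
      gcongr
    have n2 : SBM.enorm (((E ^ (a + 1) * Pi) * (G * Z)) u) ≤
        (β * τ ^ (a + 1)) * (l1 * ((10 * ε) ^ t * ‖F‖)) := by
      refine (enorm_mul _ _ _).trans ?_
      gcongr
      refine (norm_mul_le _ _).trans ?_
      gcongr
    rw [e]
    have tri : SBM.enorm (((-(1 / (l1 * mu))) • ((E ^ a * Pi) * (G * E * Z)) +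
        (-(1 / (l1 * mu))) • ((E ^ (a + 1) * Pi) * (G * Z)) +
        (-(1 / (l1 * mu))) • (E ^ (a + 2) * Z) +
        (1 / l1 + 1 / mu) • (E ^ (a + 1) * Z)) u) ≤
        1 / (l1 * mu) * SBM.enorm (((E ^ a * Pi) * (G * E * Z)) u) +
        1 / (l1 * mu) * SBM.enorm (((E ^ (a + 1) * Pi) * (G * Z)) u) +
        1 / (l1 * mu) * SBM.enorm ((E ^ (a + 2) * Z) u) +
        (1 / l1 + 1 / mu) * SBM.enorm ((E ^ (a + 1) * Z) u) := by
      have c1 : |(-(1 / (l1 * mu)))| = 1 / (l1 * mu) := by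
        rw [abs_neg, abs_of_nonneg (by positivity)]
      have c2 : |1 / l1 + 1 / mu| = 1 / l1 + 1 / mu := abs_of_nonneg (by positivity)
      refine (enorm_add _ _ _).trans (add_le_add ((enorm_add _ _ _).trans (add_le_add
        ((enorm_add _ _ _).trans (add_le_add ?_ ?_)) ?_)) ?_)
      all_goals rw [enorm_smul]
      all_goals first | rw [c1] | rw [c2]
    refine tri.trans ?_
    have hF0 := norm_nonneg F
    set Q := β * τ ^ a * (10 * ε) ^ t * ‖F‖ with hQ
    have hQ0 : 0 ≤ Q := by positivity
    calc _ ≤ 1 / (l1 * mu) * ((β * τ ^ a) * (l1 * (2 * τ) * ((10 * ε) ^ t * ‖F‖))) +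
        1 / (l1 * mu) * ((β * τ ^ (a + 1)) * (l1 * ((10 * ε) ^ t * ‖F‖))) +
        1 / (mu * mu) * (β * τ ^ (a + 2) * (10 * ε) ^ t * ‖F‖) +
        (1 / mu + 1 / mu) * (β * τ ^ (a + 1) * (10 * ε) ^ t * ‖F‖) := by
          gcongr <;> exact enorm_nonneg _
      _ = Q * (2 * ε + ε + ε ^ 2 + 2 * ε) := by
        rw [hQ]
        have : τ = ε * mu := by rw [hε]; field_simp
        generalize (10 * ε) ^ t = W
        rw [pow_succ τ (a + 1), pow_succ τ a]
        generalize τ ^ a = W2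
        rw [this]
        field_simp
        ring
      _ ≤ Q * (10 * ε) := by
        gcongr
        nlinarith
      _ = β * τ ^ a * (10 * ε) ^ (t + 1) * ‖F‖ := by rw [hQ]; ring

end det
end EMB
namespace EMB
open SBM
open scoped Matrix.Norms.L2Operator

section spec
variable {n k : ℕ} {p q : ℝ} {cl : Fin n → Fin k}

lemma sum_cl (cl : Fin n → Fin k) (h : Fin k → ℝ) :
    ∑ v, h (cl v) = ∑ i, (clusterSize cl i : ℝ) * h i := by
  rw [← Finset.sum_fiberwise' Finset.univ cl h]
  simp [clusterSize]

/-- averaging projection -/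
noncomputable def Pj (cl : Fin n → Fin k) : Matrix (Fin n) (Fin n) ℝ :=
  Matrix.of fun u v => if cl u = cl v then 1 / (clusterSize cl (cl v) : ℝ) else 0

lemma clusterSize_pos (cl : Fin n → Fin k) (u : Fin n) : 0 < clusterSize cl (cl u) :=
  Finset.card_pos.mpr ⟨u, by simp⟩

lemma Pj_mul (cl : Fin n → Fin k) : Pj cl * meanMatrix n k p q cl = meanMatrix n k p q cl := by
  ext u v
  rw [Matrix.mul_apply]
  have hpos : (clusterSize cl (cl u) : ℝ) ≠ 0 := by
    have := clusterSize_pos cl u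
    positivity
  have : ∀ w, Pj cl u w * meanMatrix n k p q cl w v =
      (fun i => if cl u = i then meanMatrix n k p q cl u v / (clusterSize cl (cl u) : ℝ) else 0)
        (cl w) := by
    intro w
    simp only [Pj, meanMatrix, Matrix.of_apply]
    by_cases h : cl u = cl w
    · simp only [h, if_true]; split_ifs <;> field_simp
    · simp [h]
  simp_rw [this]
  rw [sum_cl cl (fun i => if cl u = i then
    meanMatrix n k p q cl u v / (clusterSize cl (cl u) : ℝ) else 0)]
  simp
  field_simp

lemma row_Pj (M : Matrix (Fin n) (Fin n) ℝ) (a : ℕ) (u : Fin n) (s : ℝ) (hs0 : 0 < s)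
    (hs : ∀ i, s ≤ (clusterSize cl i : ℝ)) :
    SBM.enorm ((M ^ a * Pj cl) u) ^ 2 ≤ X cl M a u / s := by
  rw [enorm_sq]
  have h1 : ∀ v, ((M ^ a * Pj cl) u v) ^ 2 = (fun i =>
      (((M ^ a) *ᵥ (fun v => if cl v = i then (1 : ℝ) else 0)) u / clusterSize cl i) ^ 2) (cl v) := by
    intro v
    simp only [Matrix.mul_apply, Matrix.mulVec, dotProduct, Pj, Matrix.of_apply]
    congr 1
    rw [Finset.sum_div]
    refine Finset.sum_congr rfl fun w _ => ?_
    split_ifs <;> simp [div_eq_mul_inv]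
  simp_rw [h1]
  rw [sum_cl cl (fun i =>
      (((M ^ a) *ᵥ (fun v => if cl v = i then (1 : ℝ) else 0)) u / clusterSize cl i) ^ 2)]
  unfold X
  rw [Finset.sum_div]
  refine Finset.sum_le_sum fun i _ => ?_
  have hi := hs i
  have : (0 : ℝ) < clusterSize cl i := by linarith
  rw [div_pow, ← mul_div_assoc, pow_two (clusterSize cl i : ℝ), mul_div_mul_left _ _ this.ne']
  gcongr

lemma quad (cl : Fin n → Fin k) (x : Fin n → ℝ) :
    x ⬝ᵥ (meanMatrix n k p q cl *ᵥ x) =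
      q * (∑ u, x u) ^ 2 + (p - q) * ∑ i, (∑ u, if cl u = i then x u else 0) ^ 2 := by
  have h2 : ∑ i, (∑ u, if cl u = i then x u else 0) ^ 2 =
      ∑ u, ∑ v, if cl u = cl v then x u * x v else 0 := by
    simp_rw [pow_two, Finset.sum_mul_sum]
    rw [Finset.sum_comm]
    refine Finset.sum_congr rfl fun u _ => ?_
    rw [Finset.sum_comm]
    refine Finset.sum_congr rfl fun v _ => ?_
    simp only [ite_mul, zero_mul, mul_ite, mul_zero]
    by_cases h : cl u = cl v
    · simp [h]
    · simp only [h, if_false]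
      refine Finset.sum_eq_zero fun i _ => ?_
      split_ifs with h1 h2
      · exact absurd (h2.trans h1.symm) h
      · rfl
      · rfl
  rw [h2, pow_two, Finset.sum_mul_sum, Finset.mul_sum, Finset.mul_sum, ← Finset.sum_add_distrib]
  simp only [dotProduct, Matrix.mulVec, meanMatrix, Matrix.of_apply]
  refine Finset.sum_congr rfl fun u _ => ?_
  rw [Finset.mul_sum, Finset.mul_sum, Finset.mul_sum, ← Finset.sum_add_distrib]
  refine Finset.sum_congr rfl fun v _ => ?_
  split_ifs <;> ring

lemma quad_ub (hpq : q < p) (cl : Fin n → Fin k) (x : Fin n → ℝ)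
    (hx : ∑ u, x u = 0) (S : ℝ) (hS : ∀ i, (clusterSize cl i : ℝ) ≤ S) :
    x ⬝ᵥ (meanMatrix n k p q cl *ᵥ x) ≤ (p - q) * S * (x ⬝ᵥ x) := by
  rw [quad, hx]
  have h1 : ∑ i, (∑ u, if cl u = i then x u else 0) ^ 2 ≤ S * (x ⬝ᵥ x) := by
    have : S * (x ⬝ᵥ x) = ∑ i, S * ∑ u, (if cl u = i then x u ^ 2 else 0) := by
      rw [← Finset.mul_sum, Finset.sum_comm]
      congr 1
      simp [dotProduct, pow_two]
    rw [this]
    refine Finset.sum_le_sum fun i _ => ?_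
    rw [← Finset.sum_filter, ← Finset.sum_filter]
    refine (sq_sum_le_card_mul_sum_sq).trans ?_
    exact mul_le_mul_of_nonneg_right (hS i) (Finset.sum_nonneg fun _ _ => sq_nonneg _)
  have : 0 ≤ p - q := by linarith
  nlinarith

lemma quad_nonneg (hq : 0 ≤ q) (hpq : q < p) (cl : Fin n → Fin k) (x : Fin n → ℝ) :
    0 ≤ x ⬝ᵥ (meanMatrix n k p q cl *ᵥ x) := by
  rw [quad]
  have : 0 ≤ p - q := by linarith
  positivity

section dec
variable {G : Matrix (Fin n) (Fin n) ℝ} {lam : Fin n → ℝ} {v : Fin n → Fin n → ℝ}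

lemma dec_mulVec (h : IsSpectralDecomp G lam v) (x : Fin n → ℝ) :
    G *ᵥ x = ∑ i, (lam i * (v i ⬝ᵥ x)) • v i := by
  obtain ⟨-, ho, hG⟩ := h
  rw [hG, Matrix.sum_mulVec]
  refine Finset.sum_congr rfl fun i _ => ?_
  rw [Matrix.smul_mulVec, Matrix.vecMulVec_mulVec]
  ext j
  simp
  ring

lemma dec_quad (h : IsSpectralDecomp G lam v) (i j : Fin n) :
    v i ⬝ᵥ (G *ᵥ v j) = if i = j then lam i else 0 := by
  rw [dec_mulVec h, dotProduct_sum]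
  simp only [dotProduct_smul, h.2.1, smul_eq_mul]
  by_cases hij : i = j
  · subst hij; simp
  · simp [hij]

lemma dec_orth (h : IsSpectralDecomp G lam v) :
    (Matrix.of v) * (Matrix.of v)ᵀ = 1 := by
  ext i j
  rw [Matrix.mul_apply]
  simpa [dotProduct, Matrix.one_apply] using h.2.1 i j

lemma dec_orth' (h : IsSpectralDecomp G lam v) :
    (Matrix.of v)ᵀ * (Matrix.of v) = 1 := mul_eq_one_comm.mp (dec_orth h)

lemma dec_eq (h : IsSpectralDecomp G lam v) :
    G = (Matrix.of v)ᵀ * Matrix.diagonal lam * Matrix.of v := by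
  ext i j
  rw [h.2.2, Matrix.mul_apply, Matrix.sum_apply]
  refine Finset.sum_congr rfl fun a _ => ?_
  simp [Matrix.vecMulVec_apply]
  ring

lemma dec_norm (h : IsSpectralDecomp G lam v) (c : Fin n → ℝ) (K : ℝ) (hK : 0 ≤ K)
    (hc : ∀ i, |c i| ≤ K) :
    ‖(Matrix.of v)ᵀ * Matrix.diagonal c * Matrix.of v‖ ≤ K := by
  have hu : Matrix.of v ∈ unitary (Matrix (Fin n) (Fin n) ℝ) := by
    rw [Unitary.mem_iff, Matrix.star_eq_conjTranspose,
      Matrix.conjTranspose_eq_transpose_of_trivial]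
    exact ⟨dec_orth' h, dec_orth h⟩
  rw [CStarRing.norm_mul_mem_unitary _ hu]
  have hu' : (Matrix.of v)ᵀ ∈ unitary (Matrix (Fin n) (Fin n) ℝ) := by
    have := Unitary.star_mem hu
    rwa [Matrix.star_eq_conjTranspose, Matrix.conjTranspose_eq_transpose_of_trivial] at this
  rw [CStarRing.norm_mem_unitary_mul _ hu', Matrix.l2_opNorm_diagonal]
  rw [pi_norm_le_iff_of_nonneg hK]
  exact hc

lemma dec_psi (h : IsSpectralDecomp G lam v) (l1 mu : ℝ) :
    psiM l1 mu G = (Matrix.of v)ᵀ * Matrix.diagonal (fun i => psiR l1 mu (lam i)) * Matrix.of v := by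
  have h2 : G * G = (Matrix.of v)ᵀ * Matrix.diagonal (fun i => lam i ^ 2) * Matrix.of v := by
    have e : Matrix.diagonal (fun i => lam i ^ 2) = Matrix.diagonal lam * Matrix.diagonal lam := by
      rw [Matrix.diagonal_mul_diagonal]; simp only [pow_two]
    rw [e]
    nth_rewrite 1 [dec_eq h]
    nth_rewrite 1 [dec_eq h]
    calc _ = (Matrix.of v)ᵀ * Matrix.diagonal lam * (Matrix.of v * (Matrix.of v)ᵀ) *
          Matrix.diagonal lam * Matrix.of v := by simp only [mul_assoc]
      _ = _ := by rw [dec_orth h, mul_one]; simp only [mul_assoc]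
  have e : Matrix.diagonal (fun i => psiR l1 mu (lam i)) =
      (-(1 / (l1 * mu))) • Matrix.diagonal (fun i => lam i ^ 2) +
      (1 / l1 + 1 / mu) • Matrix.diagonal lam := by
    rw [← Matrix.diagonal_smul, ← Matrix.diagonal_smul, Matrix.diagonal_add]
    rfl
  rw [psiM, h2, e]
  nth_rewrite 1 [dec_eq h]
  simp only [mul_add, add_mul, Matrix.mul_smul, Matrix.smul_mul]

end dec

lemma lam_nonneg (hq : 0 ≤ q) (hpq : q < p) {lam : Fin n → ℝ} {v : Fin n → Fin n → ℝ}
    (h : IsSpectralDecomp (meanMatrix n k p q cl) lam v) (i : Fin n) : 0 ≤ lam i := by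
  have := quad_nonneg hq hpq cl (v i)
  rwa [dec_quad h, if_pos rfl] at this

lemma lam_second (hn : 0 < n) (hpq : q < p) {lam : Fin n → ℝ} {v : Fin n → Fin n → ℝ}
    (h : IsSpectralDecomp (meanMatrix n k p q cl) lam v) (S : ℝ)
    (hS : ∀ i, (clusterSize cl i : ℝ) ≤ S) (i : Fin n) (hi : i ≠ ⟨0, hn⟩) :
    lam i ≤ (p - q) * S := by
  set a := ∑ u, v i u with ha
  set b := ∑ u, v ⟨0, hn⟩ u with hb
  by_cases ha0 : a = 0
  · have := quad_ub hpq cl (v i) ha0 S hS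
    rw [dec_quad h, h.2.1] at this
    simpa using this
  · have hle : lam i ≤ lam ⟨0, hn⟩ := h.1 (by simp [Fin.le_def])
    have := quad_ub hpq cl (b • v i - a • v ⟨0, hn⟩) (by
      simp only [Pi.sub_apply, Pi.smul_apply, smul_eq_mul, Finset.sum_sub_distrib,
        ← Finset.mul_sum]
      rw [← ha, ← hb]; ring) S hS
    simp only [Matrix.mulVec_sub, Matrix.mulVec_smul, sub_dotProduct, dotProduct_sub,
      smul_dotProduct, dotProduct_smul, dec_quad h, h.2.1, hi, hi.symm, if_true, if_false,
      smul_eq_mul, mul_zero, mul_one, sub_zero, zero_sub] at this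
    have hpos : 0 < b * b + a * a := by
      have : 0 < a * a := mul_self_pos.mpr ha0
      nlinarith [mul_self_nonneg b]
    have h3 : lam i * (b * b + a * a) ≤ (p - q) * S * (b * b + a * a) := by
      nlinarith [mul_self_nonneg a]
    exact le_of_mul_le_mul_right h3 hpos

lemma norm_G (hn : 0 < n) (hq : 0 ≤ q) (hpq : q < p) {lam : Fin n → ℝ} {v : Fin n → Fin n → ℝ}
    (h : IsSpectralDecomp (meanMatrix n k p q cl) lam v) :
    ‖meanMatrix n k p q cl‖ ≤ lam ⟨0, hn⟩ := by
  rw [dec_eq h]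
  refine dec_norm h _ _ (lam_nonneg hq hpq h _) fun i => ?_
  rw [abs_of_nonneg (lam_nonneg hq hpq h _)]
  exact h.1 (by simp [Fin.le_def])

lemma lam_first (hn : 0 < n) (hk : 0 < k) (hq : 0 ≤ q) (hpq : q < p) {lam : Fin n → ℝ}
    {v : Fin n → Fin n → ℝ}
    (h : IsSpectralDecomp (meanMatrix n k p q cl) lam v) :
    (p - q) * ((n : ℝ) / k) ≤ lam ⟨0, hn⟩ := by
  have hk' : (0 : ℝ) < k := by exact_mod_cast hk
  have hn' : (0 : ℝ) < n := by exact_mod_cast hn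
  have hsum : ∑ i : Fin k, (clusterSize cl i : ℝ) = n := by
    have := sum_cl cl (fun _ => (1 : ℝ))
    simp at this
    exact this.symm
  obtain ⟨i, -, hi⟩ : ∃ i ∈ (Finset.univ : Finset (Fin k)), (n : ℝ) / k ≤ clusterSize cl i := by
    apply Finset.exists_le_of_sum_le
    · exact ⟨⟨0, hk⟩, by simp⟩
    · rw [hsum]; simp; field_simp; exact le_rfl
  set s : ℝ := ((clusterSize cl i : ℕ) : ℝ) with hs
  have hs0 : 0 < s := lt_of_lt_of_le (by positivity) hi
  set x : Fin n → ℝ := fun u => if cl u = i then 1 else 0 with hx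
  have hxx : x ⬝ᵥ x = s := by
    have : ∀ u, x u * x u = x u := by
      intro u; simp only [hx]; split_ifs <;> simp
    simp only [dotProduct, this]
    simp [hx, hs, clusterSize]
  have hxs : ∑ u, x u = s := by
    simp [hx, hs, clusterSize]
  have hlow : (p - q) * s ^ 2 ≤ x ⬝ᵥ (meanMatrix n k p q cl *ᵥ x) := by
    rw [quad]
    have h1 : (∑ u, if cl u = i then x u else 0) ^ 2 ≤
        ∑ j, (∑ u, if cl u = j then x u else 0) ^ 2 :=
      Finset.single_le_sum (f := fun j => (∑ u, if cl u = j then x u else 0) ^ 2)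
        (fun _ _ => sq_nonneg _) (Finset.mem_univ i)
    have h2 : (∑ u, if cl u = i then x u else 0) = s := by
      rw [← hxs]
      refine Finset.sum_congr rfl fun u _ => ?_
      simp only [hx]; split_ifs <;> rfl
    rw [h2] at h1
    have : 0 ≤ p - q := by linarith
    have h3 : 0 ≤ q * (∑ u, x u) ^ 2 := by positivity
    nlinarith
  have hup : x ⬝ᵥ (meanMatrix n k p q cl *ᵥ x) ≤ lam ⟨0, hn⟩ * s := by
    have e1 : x ⬝ᵥ (meanMatrix n k p q cl *ᵥ x) =
        inner ℝ (WithLp.toLp 2 (meanMatrix n k p q cl *ᵥ x) : EuclideanSpace ℝ (Fin n))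
          (WithLp.toLp 2 x) := by
      rw [EuclideanSpace.inner_eq_star_dotProduct]; simp
    have e2 : ‖(WithLp.toLp 2 x : EuclideanSpace ℝ (Fin n))‖ * 
        ‖(WithLp.toLp 2 x : EuclideanSpace ℝ (Fin n))‖ = s := by
      rw [← enorm_eq, ← pow_two, enorm_sq, ← hxx]; simp [dotProduct, pow_two]
    rw [e1, ← e2, ← mul_assoc]
    refine (real_inner_le_norm _ _).trans ?_
    gcongr
    refine (Matrix.l2_opNorm_mulVec (meanMatrix n k p q cl) (WithLp.toLp 2 x)).trans ?_
    gcongr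
    exact norm_G hn hq hpq h
  have h5 : (p - q) * s ≤ lam ⟨0, hn⟩ := by
    have : (p - q) * s * s ≤ lam ⟨0, hn⟩ * s := by nlinarith
    exact le_of_mul_le_mul_right this hs0
  have : 0 ≤ p - q := by linarith
  nlinarith

lemma norm_F (hn : 0 < n) (hk : 0 < k) (hq : 0 ≤ q) (hpq : q < p) {lam : Fin n → ℝ}
    {v : Fin n → Fin n → ℝ}
    (h : IsSpectralDecomp (meanMatrix n k p q cl) lam v) (η : ℝ) (hη : 0 ≤ η)
    (hS : ∀ i, (clusterSize cl i : ℝ) ≤ (1 + η) * ((n : ℝ) / k)) :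
    ‖psiM (lam ⟨0, hn⟩) ((p - q) * ((n : ℝ) / k)) (meanMatrix n k p q cl)‖ ≤ 1 + η := by
  rw [dec_psi h]
  refine dec_norm h _ _ (by linarith) fun i => ?_
  have hk' : (0 : ℝ) < k := by exact_mod_cast hk
  have hn' : (0 : ℝ) < n := by exact_mod_cast hn
  have hmu : 0 < (p - q) * ((n : ℝ) / k) := mul_pos (by linarith) (by positivity)
  have hl := lam_first hn hk hq hpq h
  have h0 := lam_nonneg hq hpq h i
  have hi1 : lam i ≤ lam ⟨0, hn⟩ := h.1 (by simp [Fin.le_def])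
  have hi2 : i = ⟨0, hn⟩ ∨ lam i ≤ (1 + η) * ((p - q) * ((n : ℝ) / k)) := by
    by_cases hi : i = ⟨0, hn⟩
    · exact Or.inl hi
    · right
      have := lam_second hn hpq h _ hS i hi
      linarith
  set mu := (p - q) * ((n : ℝ) / k)
  set l := lam ⟨0, hn⟩
  have hl0 : 0 < l := by linarith
  have e : psiR l mu (lam i) = 1 + (1 - lam i / l) * (lam i / mu - 1) := by
    unfold psiR; field_simp; ring
  have x1 : 0 ≤ lam i / l := by positivity
  have x2 : lam i / l ≤ 1 := (div_le_one hl0).mpr hi1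
  have y1 : 0 ≤ lam i / mu := by positivity
  rw [e, abs_le]
  constructor
  · nlinarith [mul_nonneg (sub_nonneg.mpr x2) y1]
  · rcases hi2 with hi2 | hi2
    · have : lam i / l = 1 := by rw [hi2]; exact div_self hl0.ne'
      rw [this]; linarith
    · have y2 : lam i / mu ≤ 1 + η := (div_le_iff₀ hmu).mpr hi2
      nlinarith [mul_nonneg (sub_nonneg.mpr x2) (sub_nonneg.mpr y2)]

end spec
end EMB
namespace EMB
open SBM
open scoped Matrix.Norms.L2Operator

section final
variable {n k : ℕ} {p q : ℝ} {cl : Fin n → Fin k}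

lemma X_zero (cl : Fin n → Fin k) (M : Matrix (Fin n) (Fin n) ℝ) (u : Fin n) :
    X cl M 0 u = 1 := by
  simp [X]

lemma size_mul (hpq : q < p) {C l : ℝ}
    (hsize : (n : ℝ) ≥ C * k ^ 2 * p * l ^ 12 / (p - q) ^ 2) :
    C * k ^ 2 * p * l ^ 12 ≤ n * (p - q) ^ 2 := by
  have : 0 < (p - q) ^ 2 := by have : 0 < p - q := by linarith
                               positivity
  exact (div_le_iff₀ this).mp hsize

lemma norm_E_le (r : ℕ) (hr : 1 ≤ r) (τ : ℝ) (hτ : 0 ≤ τ) (hn : (n : ℝ) ≤ Real.exp r)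
    (M : Matrix (Fin n) (Fin n) ℝ) (hM : M.IsSymm)
    (hX : ∀ u, X (id : Fin n → Fin n) M r u ≤ (τ ^ 2) ^ r) : ‖M‖ ≤ 2 * τ := by
  have h1 : ‖M‖ ^ r ≤ ‖M ^ r‖ := norm_pow_le M hM r hr
  have h2 := norm_sq_le (M ^ r)
  have h3 : ∑ u, SBM.enorm ((M ^ r) u) ^ 2 ≤ n * (τ ^ 2) ^ r := by
    calc _ ≤ ∑ u : Fin n, (τ ^ 2) ^ r := by
          refine Finset.sum_le_sum fun u _ => ?_
          rw [← X_id_eq]; exact hX u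
      _ = _ := by simp
  have h4 : Real.exp r ≤ 4 ^ r := by
    rw [← Real.exp_one_rpow, Real.rpow_natCast]
    have := Real.exp_one_lt_d9
    gcongr
    linarith
  have h5 : (‖M‖ ^ r) ^ 2 ≤ ((2 * τ) ^ r) ^ 2 := by
    calc (‖M‖ ^ r) ^ 2 ≤ ‖M ^ r‖ ^ 2 := by gcongr
      _ ≤ n * (τ ^ 2) ^ r := h2.trans h3
      _ ≤ 4 ^ r * (τ ^ 2) ^ r := by gcongr; exact hn.trans h4
      _ = ((2 * τ) ^ r) ^ 2 := by
        rw [← mul_pow, ← pow_mul (2 * τ), mul_comm r 2, pow_mul (2 * τ)]; congr 1; ring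
  have h6 : ‖M‖ ^ r ≤ (2 * τ) ^ r := (pow_le_pow_iff_left₀ (by positivity) (by positivity) (by norm_num)).mp h5
  exact (pow_le_pow_iff_left₀ (by positivity) (by positivity) (by omega)).mp h6

set_option maxHeartbeats 1600000 in
lemma det_final (hn : 0 < n) (hk : 2 ≤ k) (hq : 0 ≤ q) (hpq : q < p)
    (hbal : Balanced n k cl) (l : ℝ) (hl : l = Real.log n) (hl4 : 4 ≤ l)
    (hsize : 2500000000 * (k : ℝ) ^ 2 * p * l ^ 12 ≤ n * (p - q) ^ 2)
    {lam : Fin n → ℝ} {v : Fin n → Fin n → ℝ}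
    (hdec : IsSpectralDecomp (meanMatrix n k p q cl) lam v)
    (r : ℕ) (hr : r = ⌈l⌉₊) (M : Matrix (Fin n) (Fin n) ℝ) (hM : M.IsSymm)
    (hX : ∀ u, ∀ a, 1 ≤ a → a ≤ 2 * r → X cl M a u ≤ ((50 * l) ^ 2 * (n * p)) ^ a)
    (hXi : ∀ u, X (id : Fin n → Fin n) M r u ≤ ((50 * l) ^ 2 * (n * p)) ^ r) (u : Fin n) :
    SBM.enorm ((M * ∑ t ∈ Finset.Ico 1 r,
                (psiM (lam ⟨0, hn⟩) ((p - q) * ((n : ℝ) / k))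
                      (meanMatrix n k p q cl + M) -
                    psiM (lam ⟨0, hn⟩) ((p - q) * ((n : ℝ) / k))
                      (meanMatrix n k p q cl)) ^ t *
                  psiM (lam ⟨0, hn⟩) ((p - q) * ((n : ℝ) / k)) (meanMatrix n k p q cl) *
                  psiM (lam ⟨0, hn⟩) ((p - q) * ((n : ℝ) / k))
                      (meanMatrix n k p q cl + M) ^ (r - 1 - t)) u) ≤
      6000000 * Real.sqrt ((k : ℝ) * p) * l ^ 2 := by
  have hk' : (0 : ℝ) < k := by exact_mod_cast (by omega : 0 < k)
  have hn' : (0 : ℝ) < n := by exact_mod_cast hn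
  have hp0 : 0 < p := by linarith
  have hl0 : 0 < l := by linarith
  have hr1 : l ≤ r := by rw [hr]; exact Nat.le_ceil _
  have hr2 : (r : ℝ) ≤ l + 1 := by rw [hr]; exact (Nat.ceil_lt_add_one hl0.le).le
  have hr0 : 1 ≤ r := by
    have : (0 : ℝ) < r := by linarith
    exact_mod_cast this
  set τ : ℝ := 50 * l * Real.sqrt (n * p) with hτd
  have hτ2 : (50 * l) ^ 2 * (n * p) = τ ^ 2 := by
    rw [hτd, mul_pow _ (Real.sqrt _), Real.sq_sqrt (by positivity)]
  have hτ0 : 0 ≤ τ := by positivity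
  rw [hτ2] at hXi
  simp only [hτ2] at hX
  have hEn : ‖M‖ ≤ 2 * τ := by
    refine norm_E_le r hr0 τ hτ0 ?_ M hM hXi
    rw [← Real.exp_log hn', ← hl]
    exact Real.exp_le_exp.mpr hr1
  set mu := (p - q) * ((n : ℝ) / k) with hmu
  have hmu0 : 0 < mu := mul_pos (by linarith) (by positivity)
  set β := Real.sqrt (2 * k / n) with hβ
  have hβ0 : 0 ≤ β := Real.sqrt_nonneg _
  have hη : 1 / (16 * l) ≤ 1 / 2 := by
    rw [div_le_div_iff₀ (by positivity) (by norm_num)]; linarith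
  have hs : ∀ i, (n : ℝ) / (2 * k) ≤ (clusterSize cl i : ℝ) := by
    intro i
    have := (hbal i).1
    rw [← hl] at this
    refine le_trans ?_ this
    have e : (n : ℝ) / (2 * k) = (1 / 2) * ((n : ℝ) / k) := by field_simp
    rw [e]
    gcongr
    linarith
  have hrow : ∀ a ≤ 2 * r, SBM.enorm ((M ^ a * Pj cl) u) ≤ β * τ ^ a := by
    intro a ha
    have h1 := row_Pj (cl := cl) M a u ((n : ℝ) / (2 * k)) (by positivity) hs
    have h2 : X cl M a u ≤ (τ ^ 2) ^ a := by
      rcases Nat.eq_zero_or_pos a with h | h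
      · subst h; rw [X_zero]; simp
      · exact hX u a h ha
    have h3 : SBM.enorm ((M ^ a * Pj cl) u) ^ 2 ≤ (β * τ ^ a) ^ 2 := by
      refine h1.trans ?_
      rw [mul_pow, hβ, Real.sq_sqrt (by positivity), ← pow_mul, mul_comm a 2, pow_mul]
      calc X cl M a u / (n / (2 * k)) ≤ (τ ^ 2) ^ a / (n / (2 * k)) := by gcongr
        _ = _ := by field_simp
    exact (pow_le_pow_iff_left₀ (enorm_nonneg _) (by positivity) (by norm_num)).mp h3
  have hε : τ / mu ≤ 1 / (1000 * l) := by
    rw [div_le_div_iff₀ hmu0 (by positivity), one_mul]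
    have h1 : (τ * (1000 * l)) ^ 2 ≤ mu ^ 2 := by
      rw [mul_pow τ, ← hτ2, hmu]
      have e : ((p - q) * ((n : ℝ) / k)) ^ 2 = n * (n * (p - q) ^ 2) / k ^ 2 := by
        field_simp
      rw [e, le_div_iff₀ (by positivity)]
      have hl12 : l ^ 4 ≤ l ^ 12 := pow_le_pow_right₀ (by linarith) (by norm_num)
      calc (50 * l) ^ 2 * (n * p) * (1000 * l) ^ 2 * k ^ 2
          = n * (2500000000 * k ^ 2 * p * l ^ 4) := by ring
        _ ≤ n * (2500000000 * k ^ 2 * p * l ^ 12) := by gcongr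
        _ ≤ _ := by gcongr
    exact (pow_le_pow_iff_left₀ (by positivity) (by positivity) (by norm_num)).mp h1
  have hε0 : 0 ≤ τ / mu := by positivity
  have h2τ : 2 * τ ≤ mu := by
    have h1 : τ / mu ≤ 1 / 2 := hε.trans (by
      rw [div_le_div_iff₀ (by positivity) (by norm_num)]; linarith)
    rw [div_le_iff₀ hmu0] at h1
    linarith
  have hlf := lam_first hn (by omega) hq hpq hdec
  rw [← hmu] at hlf
  have hG := norm_G hn hq hpq hdec
  have hF : ‖psiM (lam ⟨0, hn⟩) mu (meanMatrix n k p q cl)‖ ≤ 1 + 1 / (16 * l) :=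
    norm_F hn (by omega) hq hpq hdec (1 / (16 * l)) (by positivity) fun i => by
      have := (hbal i).2
      rwa [← hl] at this
  have hD := det_D _ mu τ _ M hmu0 hlf hG hEn hτ0 h2τ
  have hDr := det_row _ mu τ β _ M (Pj cl) (2 * r) u hmu0 hlf (Pj_mul cl) hG hEn hτ0 h2τ hβ0 hrow
  set F := psiM (lam ⟨0, hn⟩) mu (meanMatrix n k p q cl)
  set Fh := psiM (lam ⟨0, hn⟩) mu (meanMatrix n k p q cl + M)
  set D := Fh - F with hDd
  have h10 : 10 * (τ / mu) ≤ 1 / (100 * l) := by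
    calc 10 * (τ / mu) ≤ 10 * (1 / (1000 * l)) := by gcongr
      _ = _ := by field_simp; norm_num
  have hFh : ‖Fh‖ ≤ 1 + 1 / l := by
    have e : Fh = F + D := by rw [hDd]; abel
    rw [e]
    refine (norm_add_le _ _).trans ?_
    have e1 : 1 / (16 * l) = (1 / 16) * (1 / l) := by field_simp
    have e2 : 1 / (100 * l) = (1 / 100) * (1 / l) := by field_simp
    have : 0 < 1 / l := by positivity
    linarith
  have hFhj : ∀ j ≤ r, ‖Fh ^ j‖ ≤ 9 := by
    intro j hj
    have : Nonempty (Fin n) := ⟨⟨0, hn⟩⟩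
    have hj' : (j : ℝ) ≤ r := by exact_mod_cast hj
    have h1 : ‖Fh ^ j‖ ≤ ‖Fh‖ ^ j := by
      rcases Nat.eq_zero_or_pos j with h | h
      · subst h
        rw [pow_zero, pow_zero]
        exact CStarRing.norm_one.le
      · exact norm_pow_le' _ h
    refine h1.trans ?_
    have h2 : 1 + 1 / l ≤ Real.exp (1 / l) := by
      have := Real.add_one_le_exp (1 / l); linarith
    calc ‖Fh‖ ^ j ≤ Real.exp (1 / l) ^ j := by gcongr; exact hFh.trans h2
      _ = Real.exp (j * (1 / l)) := (Real.exp_nat_mul _ _).symm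
      _ ≤ Real.exp 2 := by
        apply Real.exp_le_exp.mpr
        rw [mul_one_div, div_le_iff₀ hl0]; linarith
      _ = Real.exp 1 ^ 2 := by rw [← Real.exp_nat_mul]; norm_num
      _ ≤ 9 := by
        have := Real.exp_one_lt_d9
        have := Real.exp_pos 1
        nlinarith
  have hβτ : β * τ ≤ 100 * l * Real.sqrt (k * p) := by
    have h1 : (β * τ) ^ 2 ≤ (100 * l * Real.sqrt (k * p)) ^ 2 := by
      rw [mul_pow β, ← hτ2, mul_pow _ (Real.sqrt _), hβ, Real.sq_sqrt (by positivity),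
        Real.sq_sqrt (by positivity)]
      have e : 2 * (k : ℝ) / n * ((50 * l) ^ 2 * (n * p)) = 5000 * l ^ 2 * (k * p) := by
        field_simp; ring
      rw [e]
      have : 0 ≤ l ^ 2 * (k * p) := by positivity
      nlinarith
    exact (pow_le_pow_iff_left₀ (by positivity) (by positivity) (by norm_num)).mp h1
  rw [Finset.mul_sum]
  refine (enorm_sum _ _ _).trans ?_
  have hterm : ∀ t ∈ Finset.Ico 1 r, SBM.enorm ((M * (D ^ t * F * Fh ^ (r - 1 - t))) u) ≤
      18 * Real.sqrt (k * p) := by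
    intro t ht
    rw [Finset.mem_Ico] at ht
    rw [← mul_assoc]
    refine (enorm_mul _ _ _).trans ?_
    have h1 := hDr t 1 (by omega)
    rw [pow_one, pow_one] at h1
    have h2 : (10 * (τ / mu)) ^ t ≤ 1 / (100 * l) := by
      have h1l : 1 / (100 * l) ≤ 1 := by rw [div_le_one (by positivity)]; linarith
      calc (10 * (τ / mu)) ^ t ≤ (10 * (τ / mu)) ^ 1 :=
            pow_le_pow_of_le_one (by positivity) (h10.trans h1l) ht.1
        _ ≤ _ := by rw [pow_one]; exact h10
    have h3 := hFhj (r - 1 - t) (by omega)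
    have hF2 : ‖F‖ ≤ 2 := by linarith
    calc SBM.enorm ((M * (D ^ t * F)) u) * ‖Fh ^ (r - 1 - t)‖
        ≤ (β * τ * (10 * (τ / mu)) ^ t * ‖F‖) * 9 := by gcongr
      _ ≤ ((100 * l * Real.sqrt (k * p)) * (1 / (100 * l)) * 2) * 9 := by gcongr
      _ = _ := by field_simp; norm_num
  refine (Finset.sum_le_sum hterm).trans ?_
  rw [Finset.sum_const, Nat.card_Ico, nsmul_eq_mul, Nat.cast_sub hr0]
  have hsq := Real.sqrt_nonneg ((k : ℝ) * p)
  calc ((r : ℝ) - (1 : ℕ)) * (18 * Real.sqrt (k * p)) ≤ l * (18 * Real.sqrt (k * p)) := by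
        gcongr; push_cast; linarith
    _ ≤ l ^ 2 * (6000000 * Real.sqrt (k * p)) := by
        gcongr
        · nlinarith
        · norm_num
    _ = _ := by ring

lemma bad_prob {Ω : Type} [MeasureSpace Ω] [IsProbabilityMeasure (ℙ : Measure Ω)]
    {E : Ω → Matrix (Fin n) (Fin n) ℝ} (hn : 0 < n) (hq : 0 ≤ q) (hpq : q < p) (hp : p ≤ 1)
    (hE : NoiseModel p q cl E) (hnp : 1 ≤ (n : ℝ) * p) (l : ℝ) (hl : l = Real.log n)
    (hl4 : 4 ≤ l) (r : ℕ) (hr : r = ⌈l⌉₊) :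
    (ℙ : Measure Ω) (⋃ u : Fin n,
      ((⋃ a ∈ Finset.Icc 1 (2 * r), {ω | ((50 * l) ^ 2 * (n * p)) ^ a < X cl (E ω) a u}) ∪
        {ω | ((50 * l) ^ 2 * (n * p)) ^ r < X (id : Fin n → Fin n) (E ω) r u})) ≤
      ENNReal.ofReal (10000 / (n : ℝ) ^ 2) := by
  have hn' : (0 : ℝ) < n := by exact_mod_cast hn
  have hl0 : 0 < l := by linarith
  have hr1 : l ≤ r := by rw [hr]; exact Nat.le_ceil _
  have hr2 : (r : ℝ) ≤ l + 1 := by rw [hr]; exact (Nat.ceil_lt_add_one hl0.le).le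
  have hr0 : 1 ≤ r := by
    have : (0 : ℝ) < r := by linarith
    exact_mod_cast this
  have hln : l ≤ n := by
    rw [hl]; exact (Real.log_le_sub_one_of_pos hn').trans (by linarith)
  set x : ℝ := 4 * l / (n : ℝ) ^ 5 with hx
  have hx0 : 0 ≤ x := by positivity
  have hu : ∀ u : Fin n, (ℙ : Measure Ω)
      ((⋃ a ∈ Finset.Icc 1 (2 * r), {ω | ((50 * l) ^ 2 * (n * p)) ^ a < X cl (E ω) a u}) ∪
        {ω | ((50 * l) ^ 2 * (n * p)) ^ r < X (id : Fin n → Fin n) (E ω) r u}) ≤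
      ENNReal.ofReal ((2 * r + 1) * x) := by
    intro u
    have h1 : (ℙ : Measure Ω) (⋃ a ∈ Finset.Icc 1 (2 * r),
        {ω | ((50 * l) ^ 2 * (n * p)) ^ a < X cl (E ω) a u}) ≤ ENNReal.ofReal (2 * r * x) := by
      refine (measure_biUnion_finset_le _ _).trans ?_
      calc _ ≤ ∑ a ∈ Finset.Icc 1 (2 * r), ENNReal.ofReal x := by
            refine Finset.sum_le_sum fun a ha => ?_
            rw [Finset.mem_Icc] at ha
            refine X_tail hq hpq hp hE hnp cl a u l hl hl4 ha.1 ?_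
            have : (a : ℝ) ≤ 2 * r := by exact_mod_cast ha.2
            linarith
        _ = ENNReal.ofReal (2 * r * x) := by
            rw [← ENNReal.ofReal_sum_of_nonneg (fun _ _ => hx0)]
            simp
    have h2 := X_tail hq hpq hp hE hnp (id : Fin n → Fin n) r u l hl hl4 hr0 (by linarith)
    refine (measure_union_le _ _).trans ((add_le_add h1 h2).trans ?_)
    rw [← ENNReal.ofReal_add (by positivity) hx0]
    apply ENNReal.ofReal_le_ofReal
    linarith
  refine (measure_iUnion_fintype_le _ _).trans ((Finset.sum_le_sum fun u _ => hu u).trans ?_)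
  rw [← ENNReal.ofReal_sum_of_nonneg (fun _ _ => by positivity)]
  apply ENNReal.ofReal_le_ofReal
  rw [Finset.sum_const, Finset.card_univ, Fintype.card_fin, nsmul_eq_mul, hx]
  have e : (n : ℝ) * ((2 * r + 1) * (4 * l / (n : ℝ) ^ 5)) = ((2 * r + 1) * (4 * l)) / (n : ℝ) ^ 4 := by
    field_simp
  have e2 : 10000 / (n : ℝ) ^ 2 = 10000 * (n : ℝ) ^ 2 / (n : ℝ) ^ 4 := by field_simp
  rw [e, e2]
  have h5 : (2 * (r : ℝ) + 1) * (4 * l) ≤ (3 * l) * (4 * l) := by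
    gcongr
    linarith
  have h6 : l ^ 2 ≤ (n : ℝ) ^ 2 := by gcongr
  exact div_le_div_of_nonneg_right (by nlinarith) (by positivity)

lemma log_ge (h : (100 : ℝ) ≤ n) : 4 ≤ Real.log n := by
  rw [Real.le_log_iff_exp_le (by linarith)]
  have h1 : Real.exp 4 = Real.exp 1 ^ 4 := by rw [← Real.exp_nat_mul]; norm_num
  have h2 : Real.exp 1 ^ 4 ≤ (3 : ℝ) ^ 4 := by
    have := Real.exp_one_lt_d9
    gcongr
    linarith
  rw [h1]
  norm_num at h2
  linarith

end final
end EMB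
open SBM in
/-- Upper bound of `‖E·M′‖_{2→∞}`. There are constants `C, c > 0` such
that: if the partition is balanced, `k ≥ 2` and `n ≥ C·k²·p·(log n)¹²/(p−q)²`, then with
probability at least `1 − c·n^{−2}` over `E`, `‖E·M′‖_{2→∞} ≤ 6·10⁶·√(kp)·(log n)²`, where
`M′ = Σ_{t=1}^{r−1} Dᵗ·F·F̂^{r−1−t}` with `D = ψ(Ĝ) − ψ(G)`, `F = ψ(G)`, `F̂ = ψ(Ĝ)` and
`r = ⌈log n⌉`. -/
theorem EM'_bound :
    ∃ C > (0 : ℝ), ∃ c > (0 : ℝ),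
      ∀ (n k : ℕ) (hn : 0 < n) (hk : 2 ≤ k)
        (p q : ℝ) (hq : 0 ≤ q) (hpq : q < p) (hp : p ≤ 1)
        (cl : Fin n → Fin k) (hbal : Balanced n k cl)
        (hsize : (n : ℝ) ≥ C * k ^ 2 * p * (Real.log n) ^ 12 / (p - q) ^ 2)
        (lamG : Fin n → ℝ) (vG : Fin n → Fin n → ℝ)
        (hdecG : IsSpectralDecomp (meanMatrix n k p q cl) lamG vG)
        (Ω : Type) (_ : MeasureSpace Ω) (_ : IsProbabilityMeasure (ℙ : Measure Ω))
        (E : Ω → Matrix (Fin n) (Fin n) ℝ) (hE : NoiseModel p q cl E),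
        ENNReal.ofReal (1 - c / (n : ℝ) ^ 2) ≤
          ℙ {ω : Ω |
            n2i (E ω * ∑ t ∈ Finset.Ico 1 ⌈Real.log n⌉₊,
                (psiM (lamG ⟨0, hn⟩) ((p - q) * ((n : ℝ) / k))
                      (meanMatrix n k p q cl + E ω) -
                    psiM (lamG ⟨0, hn⟩) ((p - q) * ((n : ℝ) / k))
                      (meanMatrix n k p q cl)) ^ t *
                  psiM (lamG ⟨0, hn⟩) ((p - q) * ((n : ℝ) / k)) (meanMatrix n k p q cl) *
                  psiM (lamG ⟨0, hn⟩) ((p - q) * ((n : ℝ) / k))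
                      (meanMatrix n k p q cl + E ω) ^ (⌈Real.log n⌉₊ - 1 - t)) ≤
              6000000 * Real.sqrt ((k : ℝ) * p) * (Real.log n) ^ 2} := by
  refine ⟨2500000000, by norm_num, 10000, by norm_num, ?_⟩
  intro n k hn hk p q hq hpq hp cl hbal hsize lamG vG hdecG Ω _ _ E hE
  have hn' : (0 : ℝ) < n := by exact_mod_cast hn
  by_cases hn100 : (n : ℝ) < 100
  · have : 1 - 10000 / (n : ℝ) ^ 2 ≤ 0 := by
      rw [sub_nonpos, le_div_iff₀ (by positivity)]
      nlinarith
    rw [ENNReal.ofReal_of_nonpos this]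
    exact zero_le
  have hl4 := EMB.log_ge (not_lt.mp hn100)
  have hs := EMB.size_mul hpq hsize
  generalize hl : Real.log n = l at *
  have hl' := hl.symm
  have hk' : (1 : ℝ) ≤ k := by exact_mod_cast (by omega : 1 ≤ k)
  have hp0 : 0 < p := by linarith
  have hnp : 1 ≤ (n : ℝ) * p := by
    have h1 : (n : ℝ) * (p - q) ^ 2 ≤ n * p ^ 2 := by
      have : 0 ≤ p - q := by linarith
      gcongr
      linarith
    have h2 : p * 1 ≤ 2500000000 * k ^ 2 * p * l ^ 12 := by
      have a1 : (1 : ℝ) ≤ k ^ 2 := one_le_pow₀ hk'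
      have a2 : (1 : ℝ) ≤ l ^ 12 := one_le_pow₀ (by linarith)
      have a3 : (1 : ℝ) ≤ k ^ 2 * l ^ 12 := by nlinarith
      calc p * 1 ≤ p * (2500000000 * (k ^ 2 * l ^ 12)) := by gcongr; linarith
        _ = _ := by ring
    have h3 : p * 1 ≤ p * (n * p) := by linarith [h2.trans (hs.trans h1), sq p]
    exact le_of_mul_le_mul_left h3 hp0
  have hbad := EMB.bad_prob (cl := cl) hn hq hpq hp hE hnp l hl' hl4 ⌈l⌉₊ rfl
  set bad := ⋃ u : Fin n,
      ((⋃ a ∈ Finset.Icc 1 (2 * ⌈l⌉₊), {ω | ((50 * l) ^ 2 * (n * p)) ^ a < EMB.X cl (E ω) a u}) ∪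
        {ω | ((50 * l) ^ 2 * (n * p)) ^ ⌈l⌉₊ < EMB.X (id : Fin n → Fin n) (E ω) ⌈l⌉₊ u}) with hbd
  rw [ENNReal.ofReal_sub _ (by positivity), ENNReal.ofReal_one, tsub_le_iff_right]
  have huniv : (1 : ENNReal) = ℙ (Set.univ : Set Ω) := measure_univ.symm
  rw [huniv]
  refine (measure_mono ?_).trans ((measure_union_le _ bad).trans (add_le_add le_rfl hbad))
  intro ω _
  by_cases hω : ω ∈ bad
  · exact Or.inr hω
  left
  simp only [hbd, Set.mem_iUnion, Set.mem_union, Set.mem_ofPred_eq, not_exists, not_or, not_lt,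
    Finset.mem_Icc] at hω
  have : Nonempty (Fin n) := ⟨⟨0, hn⟩⟩
  rw [Set.mem_ofPred_eq]
  refine ciSup_le fun u => ?_
  exact EMB.det_final hn hk hq hpq hbal l hl' hl4 hs hdecG ⌈l⌉₊ rfl (E ω) (hE.1 ω)
    (fun u a h1 h2 => (hω u).1 a ⟨h1, h2⟩) (fun u => (hω u).2) u
end

section
/- There exist constants C, c > 0 such that the following holds. If the partition is balanced, k ≥ 2, and n ≥ C·k²·p·(log n)¹²/(p−q)², then with probability at least 1 − c·n^{−2} over the choice of E, for every natural number η with 1 ≤ η ≤ log n, both ‖E^η·L‖_{2→∞} ≤ 10⁶·√(kp)·(100·√(np))^{η−1}·(log n)^{5η} and ‖E^η·ψ(G)‖_{2→∞} ≤ 10⁶·√(kp)·(100·√(np))^{η−1}·(log n)^{5η}, where L := A·(EG + GE). -/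
open MeasureTheory ProbabilityTheory Matrix Finset

set_option linter.unusedSectionVars false
set_option linter.unusedVariables false
namespace SBM
section Comb
variable {V : Type*} [Fintype V] [DecidableEq V]

/-- vertex before step `t` -/
def prv (η : ℕ) (u : V) {N : ℕ} (W : Fin N → V) (t : Fin N) : V :=
  if t.val % η = 0 then u else W ⟨t.val - 1, by omega⟩

/-- first visit of a vertex other than `u` -/
def IsNew (u : V) {N : ℕ} (W : Fin N → V) (t : Fin N) : Prop :=
  W t ≠ u ∧ ∀ s < t, W s ≠ W t

instance (u : V) {N : ℕ} (W : Fin N → V) : DecidablePred (IsNew u W) := fun t => by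
  unfold IsNew; infer_instance

def edg (η : ℕ) (u : V) {N : ℕ} (W : Fin N → V) (t : Fin N) : Sym2 V :=
  s(prv η u W t, W t)

inductive Clean (η : ℕ) (u : V) (S : Finset V) {N : ℕ} (W : Fin N → V) : V → Prop
  | root : Clean η u S W u
  | step (t : Fin N) : IsNew u W t → W t ∉ S → Clean η u S W (prv η u W t) → Clean η u S W (W t)

variable {η : ℕ} {u : V} {N : ℕ} {W : Fin N → V}

lemma prv_spec (t : Fin N) : prv η u W t = u ∨ ∃ s < t, W s = prv η u W t := by
  unfold prv
  split_ifs with h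
  · exact Or.inl rfl
  · right
    refine ⟨⟨t.val - 1, by omega⟩, ?_, rfl⟩
    have : t.val ≠ 0 := by
      intro h0; apply h; simp [h0]
    rw [Fin.lt_def]; simp only; omega

lemma new_eq {s t : Fin N} (hs : IsNew u W s) (ht : IsNew u W t) (h : W s = W t) : s = t := by
  rcases lt_trichotomy s t with hl | hl | hl
  · exact absurd h (ht.2 s hl)
  · exact hl
  · exact absurd h.symm (hs.2 t hl)

lemma edg_lt {s t : Fin N} (ht : IsNew u W t) (hl : s < t) : edg η u W s ≠ edg η u W t := by
  intro h
  unfold edg at h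
  rw [Sym2.eq_iff] at h
  rcases h with ⟨_, h⟩ | ⟨h, _⟩
  · exact ht.2 s hl h
  · rcases prv_spec (η := η) (u := u) (W := W) s with h' | ⟨s', hs', h'⟩
    · exact ht.1 (h ▸ h')
    · exact ht.2 s' (hs'.trans hl) (h'.trans h)

lemma edg_inj {s t : Fin N} (hs : IsNew u W s) (ht : IsNew u W t)
    (h : edg η u W s = edg η u W t) : s = t := by
  rcases lt_trichotomy s t with hl | hl | hl
  · exact absurd h (edg_lt ht hl)
  · exact hl
  · exact absurd h.symm (edg_lt hs hl)

lemma Clean.not_mem {S : Finset V} (hu : u ∉ S) {x : V} (h : Clean η u S W x) : x ∉ S := by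
  cases h with
  | root => exact hu
  | step t _ h _ => exact h

lemma Clean.parent {S : Finset V} {x : V} (h : Clean η u S W x) {t : Fin N}
    (ht : IsNew u W t) (hx : x = W t) : Clean η u S W (prv η u W t) := by
  cases h with
  | root => exact absurd hx.symm ht.1
  | step t' h1 h2 h3 =>
    have := new_eq h1 ht hx
    subst this
    exact h3

/-- set of first-visit times -/
def NewS (u : V) {N : ℕ} (W : Fin N → V) : Finset (Fin N) := univ.filter (IsNew u W)

lemma card_fib_ge (hd : ∀ t : Fin N, ∃ s, s ≠ t ∧ edg η u W s = edg η u W t)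
    (A : Finset (Fin N)) (hA : A ⊆ NewS u W) :
    2 * #A ≤ #(univ.filter fun t => edg η u W t ∈ A.image (edg η u W)) := by
  rw [card_eq_sum_card_fiberwise (f := edg η u W) (t := A.image (edg η u W))
    (s := univ.filter fun t => edg η u W t ∈ A.image (edg η u W))
    (fun t ht => by rw [mem_coe, mem_filter] at ht; exact ht.2)]
  have hinj : Set.InjOn (edg η u W) (A : Set (Fin N)) := by
    intro s hs t ht h
    exact edg_inj (by simpa [NewS] using hA hs) (by simpa [NewS] using hA ht) h
  rw [mul_comm, ← card_image_of_injOn hinj, ← smul_eq_mul]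
  apply card_nsmul_le_sum
  intro e he
  obtain ⟨t, ht, rfl⟩ := mem_image.1 he
  obtain ⟨s, hst, hs⟩ := hd t
  have : ({s, t} : Finset (Fin N)) ⊆ (univ.filter fun t => edg η u W t ∈ A.image (edg η u W)).filter
      (fun a => edg η u W a = edg η u W t) := by
    intro a ha
    simp only [mem_insert, mem_singleton] at ha
    rcases ha with rfl | rfl
    · simp only [mem_filter, mem_univ, true_and, hs, and_true]; exact he
    · simp only [mem_filter, mem_univ, true_and, and_true]; exact he
  calc 2 = #({s, t} : Finset (Fin N)) := (card_pair hst).symm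
    _ ≤ _ := card_le_card this

lemma two_new_le (hd : ∀ t : Fin N, ∃ s, s ≠ t ∧ edg η u W s = edg η u W t) :
    2 * #(NewS u W) ≤ N := by
  refine (card_fib_ge hd _ (Subset.refl _)).trans ?_
  simpa using card_filter_le (univ : Finset (Fin N)) _

lemma new_le_edges : #(NewS u W) ≤ #((univ : Finset (Fin N)).image (edg η u W)) := by
  rw [← card_image_of_injOn (s := NewS u W) (f := edg η u W)]
  · exact card_le_card (image_subset_image (subset_univ _))
  · intro s hs t ht h
    exact edg_inj (by simpa [NewS] using hs) (by simpa [NewS] using ht) h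

end Comb

section Comb2
variable {V : Type*} [Fintype V] [DecidableEq V]
variable {η : ℕ} {u : V} {M : ℕ} {W : Fin (M * η) → V}

lemma walk_bound (i : Fin M) (j : ℕ) (hj : j < η) : i.val * η + j < M * η := by
  have : (i.val + 1) * η ≤ M * η := Nat.mul_le_mul_right _ i.2
  nlinarith

lemma walk_step {S : Finset V} (hu : u ∉ S) (hη : 0 < η) (i : Fin M)
    (hend : W ⟨i.val * η + (η - 1), walk_bound i _ (by omega)⟩ ∈ S) :
    ∃ j : Fin η, edg η u W ⟨i.val * η + j.val, walk_bound i _ j.2⟩ ∉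
      ((NewS u W).filter fun t => W t ∉ S).image (edg η u W) := by
  by_contra hcon
  push Not at hcon
  have key : ∀ t : Fin (M * η), edg η u W t ∈
      ((NewS u W).filter fun t => W t ∉ S).image (edg η u W) →
      Clean η u S W (prv η u W t) → Clean η u S W (W t) := by
    intro t ht hc
    obtain ⟨s, hs, hst⟩ := mem_image.1 ht
    simp only [NewS, mem_filter, mem_univ, true_and] at hs
    unfold edg at hst
    rw [Sym2.eq_iff] at hst
    rcases hst with ⟨h1, h2⟩ | ⟨h1, h2⟩
    · rw [← h2]; exact Clean.step s hs.1 hs.2 (h1 ▸ hc)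
    · rw [← h1]; exact hc.parent hs.1 h2.symm
  have main : ∀ j (hj : j < η), Clean η u S W (W ⟨i.val * η + j, walk_bound i _ hj⟩) := by
    intro j
    induction j with
    | zero =>
      intro hj
      apply key _ (hcon ⟨0, hj⟩)
      have : prv η u W ⟨i.val * η + 0, walk_bound i _ hj⟩ = u := by
        unfold prv; rw [if_pos]; simp
      rw [this]; exact Clean.root
    | succ j ih =>
      intro hj
      apply key _ (hcon ⟨j + 1, hj⟩)
      have : prv η u W ⟨i.val * η + (j + 1), walk_bound i _ hj⟩ =
          W ⟨i.val * η + j, walk_bound i _ (by omega)⟩ := by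
        unfold prv
        rw [if_neg]
        · congr 1
        · simp only [Nat.mul_add_mod_self_right]
          rw [Nat.mod_eq_of_lt hj]; omega
      rw [this]; exact ih (by omega)
  exact (main (η - 1) (by omega)).not_mem hu hend

lemma gain_count {S : Finset V} (hu : u ∉ S) (hη : 0 < η)
    (hd : ∀ t : Fin (M * η), ∃ s, s ≠ t ∧ edg η u W s = edg η u W t)
    (hend : ∀ i : Fin M, W ⟨i.val * η + (η - 1), walk_bound i _ (by omega)⟩ ∈ S) :
    2 * #(NewS u W) + M ≤ M * η + 2 * #((NewS u W).filter fun t => W t ∈ S) := by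
  have h1 := card_fib_ge (η := η) hd ((NewS u W).filter fun t => W t ∉ S) (filter_subset _ _)
  set B := ((NewS u W).filter fun t => W t ∉ S).image (edg η u W) with hB
  have h2 : #((NewS u W).filter fun t => W t ∈ S) + #((NewS u W).filter fun t => W t ∉ S)
    = #(NewS u W) := card_filter_add_card_filter_not _
  have h3 : #(univ.filter fun t => edg η u W t ∈ B) + #(univ.filter fun t => edg η u W t ∉ B)
    = M * η := by
    rw [card_filter_add_card_filter_not]; simp
  have h4 : M ≤ #(univ.filter fun t => edg η u W t ∉ B) := by
    choose j hj using fun i => walk_step hu hη i (hend i)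
    have := card_le_card_of_injOn (s := (univ : Finset (Fin M)))
      (t := univ.filter fun t => edg η u W t ∉ B)
      (fun i => ⟨i.val * η + (j i).val, walk_bound i _ (j i).2⟩)
      (fun i _ => by rw [mem_coe, mem_filter]; exact ⟨mem_univ _, hj i⟩) (by
        intro i _ i' _ h
        simp only [Fin.mk.injEq] at h
        have e : ∀ i : Fin M, (i.val * η + (j i).val) / η = i.val := by
          intro i
          rw [mul_comm, Nat.mul_add_div hη, Nat.div_eq_of_lt (j i).2]; simp
        ext
        rw [← e i, ← e i', h])
    simpa using this
  omega

end Comb2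
section Weight
variable {V : Type*} [Fintype V] [DecidableEq V]

noncomputable def wt (u : V) (S : Finset V) (D ρ : ℝ) {N : ℕ} (W : Fin N → V) (t : Fin N) : ℝ :=
  if IsNew u W t then (if W t ∈ S then 1 / (ρ * Fintype.card V) else 1 / Fintype.card V) else 1 / D

lemma isNew_snoc_castSucc (u : V) {N : ℕ} (W : Fin N → V) (x : V) (t : Fin N) :
    IsNew u (Fin.snoc (α := fun _ => V) W x) t.castSucc ↔ IsNew u W t := by
  unfold IsNew
  simp only [Fin.snoc_castSucc]
  refine and_congr Iff.rfl ⟨fun h s hs => ?_, fun h s hs => ?_⟩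
  · have := h s.castSucc (by simpa using hs)
    simpa using this
  · have hs' : s.val < t.val := hs
    have := h ⟨s.val, by omega⟩ hs'
    have e : s = Fin.castSucc (⟨s.val, by omega⟩ : Fin N) := by ext; simp
    rw [e, Fin.snoc_castSucc]; exact this

lemma wt_snoc_castSucc (u : V) (S : Finset V) (D ρ : ℝ) {N : ℕ} (W : Fin N → V) (x : V)
    (t : Fin N) :
    wt u S D ρ (Fin.snoc (α := fun _ => V) W x) t.castSucc = wt u S D ρ W t := by
  unfold wt
  simp only [isNew_snoc_castSucc, Fin.snoc_castSucc]

lemma wt_nonneg (u : V) (S : Finset V) {D ρ : ℝ} (hD : 0 ≤ D) (hρ : 0 ≤ ρ) {N : ℕ} (W : Fin N → V)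
    (t : Fin N) : 0 ≤ wt u S D ρ W t := by
  unfold wt; split_ifs <;> positivity

lemma wt_last_sum (u : V) (S : Finset V) {D ρ : ℝ} (hρ : 0 < ρ)
    (hS : (#S : ℝ) ≤ ρ * Fintype.card V) {N : ℕ} (hD : ((N + 1 : ℕ) : ℝ) ≤ D) (W : Fin N → V) :
    ∑ x, wt u S D ρ (Fin.snoc (α := fun _ => V) W x) (Fin.last N) ≤ 3 := by
  have hD0 : 0 < D := lt_of_lt_of_le (by positivity) hD
  have hV : 0 < (Fintype.card V : ℝ) := by
    have : Nonempty V := ⟨u⟩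
    exact_mod_cast Fintype.card_pos
  have hle : ∀ x, wt u S D ρ (Fin.snoc (α := fun _ => V) W x) (Fin.last N) ≤
      (if x ∈ insert u (univ.image W) then 1 / D else 0) +
      (if x ∈ S then 1 / (ρ * Fintype.card V) else 0) + 1 / Fintype.card V := by
    intro x
    have h1 : (0 : ℝ) ≤ (if x ∈ insert u (univ.image W) then 1 / D else 0) := by
      split_ifs <;> positivity
    have h2 : (0 : ℝ) ≤ (if x ∈ S then 1 / (ρ * Fintype.card V) else 0) := by
      split_ifs <;> positivity
    have h3 : (0 : ℝ) ≤ 1 / Fintype.card V := by positivity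
    unfold wt
    simp only [Fin.snoc_last]
    by_cases hn : IsNew u (Fin.snoc (α := fun _ => V) W x) (Fin.last N)
    · rw [if_pos hn]
      by_cases hx : x ∈ S
      · simp only [hx, if_true]; linarith
      · simp only [hx, if_false]; linarith
    · rw [if_neg hn]
      have : x ∈ insert u (univ.image W) := by
        by_contra hx
        apply hn
        simp only [mem_insert, mem_image, mem_univ, true_and, not_or, not_exists] at hx
        unfold IsNew
        simp only [Fin.snoc_last]
        refine ⟨hx.1, fun s hs => ?_⟩
        have hs' : s.val < N := hs
        have e : s = Fin.castSucc (⟨s.val, hs'⟩ : Fin N) := by ext; simp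
        rw [e, Fin.snoc_castSucc]; exact hx.2 _
      rw [if_pos this]; linarith
  refine (sum_le_sum fun x _ => hle x).trans ?_
  rw [sum_add_distrib, sum_add_distrib]
  simp only [sum_ite_mem, univ_inter, sum_const, nsmul_eq_mul, card_univ]
  have c1 : (#(insert u (univ.image W)) : ℝ) * (1 / D) ≤ 1 := by
    rw [mul_one_div, div_le_one hD0]
    refine le_trans ?_ hD
    have := card_insert_le u (univ.image W)
    have h' := card_image_le (s := (univ : Finset (Fin N))) (f := W)
    simp only [card_univ, Fintype.card_fin] at h'
    exact_mod_cast this.trans (by omega)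
  have c2 : (#S : ℝ) * (1 / (ρ * Fintype.card V)) ≤ 1 := by
    rw [mul_one_div, div_le_one (by positivity)]; exact hS
  have c3 : (Fintype.card V : ℝ) * (1 / Fintype.card V) = 1 := by field_simp
  linarith

lemma sum_wt (u : V) (S : Finset V) {D ρ : ℝ} (hρ : 0 < ρ)
    (hS : (#S : ℝ) ≤ ρ * Fintype.card V) (N : ℕ) (hD0 : 0 < D) (hD : (N : ℝ) ≤ D) :
    ∑ W : Fin N → V, ∏ t, wt u S D ρ W t ≤ 3 ^ N := by
  induction N with
  | zero => simp
  | succ N ih =>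
    rw [← (Fin.snocEquiv (fun _ : Fin (N + 1) => V)).sum_comp, Fintype.sum_prod_type_right]
    have ih' := ih (le_trans (by push_cast; linarith) hD)
    calc _ = ∑ W : Fin N → V, (∏ t, wt u S D ρ W t) *
          ∑ x, wt u S D ρ (Fin.snoc (α := fun _ => V) W x) (Fin.last N) := by
          refine sum_congr rfl fun W _ => ?_
          rw [mul_sum]
          refine sum_congr rfl fun x _ => ?_
          rw [Fin.prod_univ_castSucc]
          simp only [Fin.snocEquiv, Equiv.coe_fn_mk]
          congr 1
          exact prod_congr rfl fun t _ => wt_snoc_castSucc u S D ρ W x t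
      _ ≤ ∑ W : Fin N → V, (∏ t, wt u S D ρ W t) * 3 := by
          refine sum_le_sum fun W _ => ?_
          exact mul_le_mul_of_nonneg_left (wt_last_sum u S hρ hS hD W)
            (prod_nonneg fun t _ => wt_nonneg u S hD0.le hρ.le W t)
      _ ≤ 3 ^ (N + 1) := by
          rw [← sum_mul, pow_succ]; gcongr

lemma prod_wt (u : V) (S : Finset V) {D ρ : ℝ} {N : ℕ} (W : Fin N → V) :
    ∏ t, wt u S D ρ W t = (1 / (Fintype.card V : ℝ)) ^ #(NewS u W) *
      (1 / ρ) ^ #((NewS u W).filter fun t => W t ∈ S) * (1 / D) ^ (N - #(NewS u W)) := by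
  have h1 : ∀ t, wt u S D ρ W t = (if IsNew u W t then (1 / (Fintype.card V : ℝ)) *
      (if W t ∈ S then 1 / ρ else 1) else 1 / D) := by
    intro t
    unfold wt
    split_ifs
    · field_simp
    · simp
    · rfl
  simp only [h1]
  rw [prod_ite, prod_mul_distrib, prod_const, prod_const, ← prod_filter, prod_const]
  have : #(univ.filter fun t => ¬ IsNew u W t) = N - #(NewS u W) := by
    have := card_filter_add_card_filter_not (s := (univ : Finset (Fin N))) (IsNew u W)
    simp only [card_univ, Fintype.card_fin] at this
    unfold NewS; omega
  rw [this]; rfl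

/-- numeric comparison -/
lemma weight_compare {n p D ρ : ℝ} (hn : 0 < n) (hp : 0 ≤ p) (hD : 0 < D) (hρ : 0 < ρ) (hρ1 : ρ ≤ 1)
    (hnp : D ≤ ρ * (n * p)) (m η v r : ℕ) (h1 : 2 * v ≤ (2 * m) * η)
    (h2 : ρ = 1 ∨ 2 * v + 2 * m ≤ (2 * m) * η + 2 * r) :
    p ^ v ≤ ((1 / n) ^ v * (1 / ρ) ^ r * (1 / D) ^ ((2 * m) * η - v)) *
      ((D * (n * p)) ^ (m * η) * ρ ^ m) := by
  have hle : D ≤ n * p := hnp.trans (by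
    have : 0 ≤ n * p := by positivity
    nlinarith)
  have hx : 0 < n * p := by linarith
  obtain ⟨a, ha⟩ : ∃ a, m * η = v + a := ⟨m * η - v, by
    have : (2 * m) * η = 2 * (m * η) := by ring
    omega⟩
  have hN : (2 * m) * η - v = v + 2 * a := by
    have : (2 * m) * η = 2 * (m * η) := by ring
    omega
  rw [hN, ha]
  have e : ((1 / n) ^ v * (1 / ρ) ^ r * (1 / D) ^ (v + 2 * a)) *
      ((D * (n * p)) ^ (v + a) * ρ ^ m) = p ^ v * ((n * p / D) ^ a * ρ ^ m * (1 / ρ) ^ r) := by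
    simp only [one_div, inv_pow, div_pow, mul_pow, pow_add, pow_mul]
    field_simp
    ring
  rw [e]
  refine le_mul_of_one_le_right (by positivity) ?_
  have hq1 : 1 ≤ n * p / D := by rw [le_div_iff₀ hD]; linarith
  have hq : 1 / ρ ≤ n * p / D := by
    rw [div_le_div_iff₀ hρ hD]; linarith
  have hi : 1 ≤ 1 / ρ := by rw [le_div_iff₀ hρ]; linarith
  rcases h2 with h2 | h2
  · subst h2
    simpa using one_le_pow₀ hq1
  · have hm : m ≤ a + r := by
      have : (2 * m) * η = 2 * (m * η) := by ring
      omega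
    calc (1 : ℝ) = (1 / ρ) ^ m * ρ ^ m := by rw [← mul_pow]; field_simp; simp
      _ ≤ (1 / ρ) ^ (a + r) * ρ ^ m := by gcongr
      _ = (1 / ρ) ^ a * ρ ^ m * (1 / ρ) ^ r := by rw [pow_add]; ring
      _ ≤ _ := by gcongr
end Weight
section Expect

lemma exp_bound {Ω : Type*} [MeasureSpace Ω] [IsProbabilityMeasure (ℙ : Measure Ω)]
    {I : Type*} [Fintype I] [DecidableEq I] {X : I → Ω → ℝ} {p : ℝ} (hp0 : 0 ≤ p)
    (hind : iIndepFun X ℙ) (hm : ∀ i, Measurable (X i)) (hb : ∀ i, ∀ᵐ ω, |X i ω| ≤ 1)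
    (h0 : ∀ i, ∫ ω, X i ω = 0) (h2 : ∀ i, ∫ ω, X i ω ^ 2 ≤ p) {N : ℕ} (ε : Fin N → I) :
    |∫ ω, ∏ t, X (ε t) ω| ≤
      if (∀ t, ∃ s, s ≠ t ∧ ε s = ε t) then p ^ #(univ.image ε) else 0 := by
  set c : I → ℕ := fun i => #(univ.filter fun t => ε t = i) with hc
  have e1 : ∀ ω, ∏ t, X (ε t) ω = ∏ i, X i ω ^ c i := by
    intro ω
    rw [prod_comp (fun i => X i ω) ε]
    refine prod_subset (subset_univ _) fun i _ hi => ?_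
    have : #(univ.filter fun t => ε t = i) = 0 := by
      rw [card_eq_zero, filter_eq_empty_iff]
      intro t _ ht
      exact hi (mem_image.2 ⟨t, mem_univ _, ht⟩)
    rw [this, pow_zero]
  have e2 : ∫ ω, ∏ t, X (ε t) ω = ∏ i, ∫ ω, X i ω ^ c i := by
    simp only [e1]
    exact hind.integral_fun_prod_comp (f := fun i x => x ^ c i)
      (fun i => (hm i).aemeasurable)
      (fun i => (measurable_id.pow_const _).aestronglyMeasurable)
  have hbd : ∀ i, 2 ≤ c i → |∫ ω, X i ω ^ c i| ≤ p := by
    intro i hi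
    refine le_trans ?_ (h2 i)
    refine (abs_integral_le_integral_abs).trans ?_
    refine integral_mono_of_nonneg (Filter.Eventually.of_forall fun ω => abs_nonneg _) ?_ ?_
    · refine Integrable.of_bound (C := 1) ((hm i).pow_const 2).aestronglyMeasurable ?_
      filter_upwards [hb i] with ω hω
      rw [norm_pow, Real.norm_eq_abs]
      exact pow_le_one₀ (abs_nonneg _) hω
    · filter_upwards [hb i] with ω hω
      show |X i ω ^ c i| ≤ X i ω ^ 2
      rw [abs_pow, ← sq_abs]
      exact pow_le_pow_of_le_one (abs_nonneg _) hω hi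
  rw [e2, abs_prod]
  split_ifs with h
  · rw [← prod_const]
    have : ∏ i, |∫ ω, X i ω ^ c i| = ∏ i ∈ univ.image ε, |∫ ω, X i ω ^ c i| := by
      symm
      refine prod_subset (subset_univ _) fun i _ hi => ?_
      have : c i = 0 := by
        rw [hc]; simp only
        rw [card_eq_zero, filter_eq_empty_iff]
        intro t _ ht
        exact hi (mem_image.2 ⟨t, mem_univ _, ht⟩)
      simp [this]
    rw [this]
    refine prod_le_prod (fun _ _ => abs_nonneg _) fun i hi => hbd i ?_
    obtain ⟨t, _, rfl⟩ := mem_image.1 hi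
    obtain ⟨s, hst, hs⟩ := h t
    calc 2 = #({s, t} : Finset (Fin N)) := (card_pair hst).symm
      _ ≤ _ := card_le_card (by
        intro a ha
        simp only [mem_insert, mem_singleton] at ha
        rcases ha with rfl | rfl <;> simp [hs])
  · push Not at h
    obtain ⟨t, ht⟩ := h
    refine le_of_eq (prod_eq_zero (mem_univ (ε t)) ?_)
    have : c (ε t) = 1 := by
      rw [hc]; simp only
      rw [card_eq_one]
      refine ⟨t, ?_⟩
      ext s
      simp only [mem_filter, mem_univ, true_and, mem_singleton]
      exact ⟨fun hs => by_contra fun hne => ht s hne hs, fun hs => by rw [hs]⟩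
    simp [this, h0]

end Expect

section Walk
variable {V : Type*} [Fintype V] [DecidableEq V]

lemma pow_mulVec_walk (E : Matrix V V ℝ) (z : V → ℝ) (η : ℕ) (u : V) :
    (E ^ η *ᵥ z) u = ∑ w : Fin η → V,
      (∏ j : Fin η, E (Fin.cons (α := fun _ => V) u w j.castSucc) (w j)) *
        z (Fin.cons (α := fun _ => V) u w (Fin.last η)) := by
  induction η generalizing u with
  | zero => simp [Fin.last]
  | succ η ih =>
    rw [pow_succ', ← Matrix.mulVec_mulVec, Matrix.mulVec, dotProduct,
      ← (Fin.consEquiv (fun _ : Fin (η + 1) => V)).sum_comp, Fintype.sum_prod_type]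
    refine sum_congr rfl fun x _ => ?_
    rw [ih, mul_sum]
    refine sum_congr rfl fun w _ => ?_
    simp only [Fin.consEquiv, Equiv.coe_fn_mk]
    rw [Fin.prod_univ_succ]
    have h1 : Fin.last (η + 1) = (Fin.last η).succ := rfl
    simp only [h1, Fin.cons_succ, Fin.castSucc_zero, Fin.cons_zero, ← Fin.succ_castSucc]
    ring

end Walk
section Moment
variable {V : Type*} [Fintype V] [DecidableEq V]

lemma walk_power (E : Matrix V V ℝ) (z : V → ℝ) (η : ℕ) (hη : 0 < η) (M : ℕ) (u : V) :
    ((E ^ η *ᵥ z) u) ^ M = ∑ W : Fin (M * η) → V,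
      (∏ t, E (prv η u W t) (W t)) *
        ∏ i : Fin M, z (W ⟨i.val * η + (η - 1), walk_bound i _ (by omega)⟩) := by
  rw [pow_mulVec_walk, Fintype.sum_pow]
  let e : (Fin (M * η) → V) ≃ (Fin M → Fin η → V) :=
    (Equiv.arrowCongr finProdFinEquiv.symm (Equiv.refl V)).trans (Equiv.curry _ _ _)
  have he : ∀ W i j, e W i j = W (finProdFinEquiv (i, j)) := fun W i j => rfl
  rw [← e.sum_comp]
  refine sum_congr rfl fun W _ => ?_
  rw [prod_mul_distrib]
  congr 1
  · rw [← finProdFinEquiv.prod_comp, Fintype.prod_prod_type]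
    refine prod_congr rfl fun i _ => prod_congr rfl fun j _ => ?_
    rw [he]
    congr 1
    unfold prv
    have hv : (finProdFinEquiv (i, j)).val = j.val + η * i.val := rfl
    simp only [hv, Nat.add_mul_mod_self_left, Nat.mod_eq_of_lt j.2]
    split_ifs with h
    · have : j.castSucc = 0 := by ext; simpa using h
      rw [this, Fin.cons_zero]
    · have : j.castSucc = Fin.succ ⟨j.val - 1, by omega⟩ := by
        ext; simp; omega
      rw [this, Fin.cons_succ, he]
      congr 1
      ext
      show j.val - 1 + η * i.val = j.val + η * i.val - 1
      omega
  · refine prod_congr rfl fun i _ => ?_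
    obtain ⟨η', rfl⟩ : ∃ η', η = η' + 1 := ⟨η - 1, by omega⟩
    have h1 : Fin.last (η' + 1) = (Fin.last η').succ := rfl
    rw [h1, Fin.cons_succ, he]
    congr 2
    ext
    show η' + (η' + 1) * i.val = i.val * (η' + 1) + (η' + 1 - 1)
    simp; ring

/-- indicator vector -/
def ind (S : Finset V) : V → ℝ := fun v => if v ∈ S then 1 else 0

lemma moment_bound {Ω : Type*} [MeasureSpace Ω] [IsProbabilityMeasure (ℙ : Measure Ω)]
    {X : Sym2 V → Ω → ℝ} {p : ℝ} (hp0 : 0 ≤ p) (hp1 : p ≤ 1)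
    (hind : iIndepFun X ℙ) (hm : ∀ i, Measurable (X i)) (hb : ∀ i, ∀ᵐ ω, |X i ω| ≤ 1)
    (h0 : ∀ i, ∫ ω, X i ω = 0) (h2 : ∀ i, ∫ ω, X i ω ^ 2 ≤ p)
    (E : Ω → Matrix V V ℝ) (hE : ∀ ω a b, E ω a b = X s(a, b) ω)
    (u : V) (S : Finset V) {ρ : ℝ} (hρ : 0 < ρ) (hρ1 : ρ ≤ 1)
    (hS : (#S : ℝ) ≤ ρ * Fintype.card V) (hgain : ρ = 1 ∨ u ∉ S)
    (m η : ℕ) (hm0 : 0 < m) (hη : 0 < η) {D : ℝ} (hD : ((2 * m * η : ℕ) : ℝ) ≤ D)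
    (hnp : D ≤ ρ * (Fintype.card V * p)) :
    Integrable (fun ω => ((E ω ^ η *ᵥ ind S) u) ^ (2 * m)) ℙ ∧
    ∫ ω, ((E ω ^ η *ᵥ ind S) u) ^ (2 * m) ≤ ((9 * D * (Fintype.card V * p)) ^ η * ρ) ^ m := by
  have hD0 : 0 < D := lt_of_lt_of_le (by positivity) hD
  have hV : 0 < (Fintype.card V : ℝ) := by
    have : Nonempty V := ⟨u⟩
    exact_mod_cast Fintype.card_pos
  have hEq : ∀ ω, ((E ω ^ η *ᵥ ind S) u) ^ (2 * m) = ∑ W : Fin (2 * m * η) → V,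
      (∏ t, X (edg η u W t) ω) *
        ∏ i : Fin (2 * m), ind S (W ⟨i.val * η + (η - 1), walk_bound i _ (by omega)⟩) := by
    intro ω
    rw [walk_power _ _ _ hη]
    simp only [hE]; rfl
  have hIntg : ∀ W : Fin (2 * m * η) → V, Integrable (fun ω => (∏ t, X (edg η u W t) ω)) ℙ := by
    intro W
    refine Integrable.of_bound (C := 1)
      (Finset.measurable_prod _ fun t _ => hm _).aestronglyMeasurable ?_
    have : ∀ᵐ ω, ∀ i, |X i ω| ≤ 1 := ae_all_iff.2 hb
    filter_upwards [this] with ω hω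
    rw [Real.norm_eq_abs, abs_prod]
    exact prod_le_one (fun _ _ => abs_nonneg _) fun _ _ => hω _
  simp only [hEq]
  refine ⟨integrable_finsetSum _ fun W _ => (hIntg W).mul_const _, ?_⟩
  rw [integral_finsetSum _ fun W _ => (hIntg W).mul_const _]
  simp only [integral_mul_const]
  have hterm : ∀ W : Fin (2 * m * η) → V, (∫ ω, ∏ t, X (edg η u W t) ω) *
        ∏ i : Fin (2 * m), ind S (W ⟨i.val * η + (η - 1), walk_bound i _ (by omega)⟩) ≤
        (∏ t, wt u S D ρ W t) * ((D * (Fintype.card V * p)) ^ (m * η) * ρ ^ m) := by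
    intro W
    have hR : 0 ≤ (∏ t, wt u S D ρ W t) * ((D * (Fintype.card V * p)) ^ (m * η) * ρ ^ m) := by
      have := prod_nonneg (s := univ) fun t _ => wt_nonneg u S hD0.le hρ.le W t
      positivity
    by_cases hend : ∀ i : Fin (2 * m), W ⟨i.val * η + (η - 1), walk_bound i _ (by omega)⟩ ∈ S
    · have e1 : ∏ i : Fin (2 * m), ind S (W ⟨i.val * η + (η - 1), walk_bound i _ (by omega)⟩) = 1 :=
        prod_eq_one fun i _ => by unfold ind; rw [if_pos (hend i)]
      rw [e1, mul_one]
      refine (le_abs_self _).trans ?_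
      refine (exp_bound hp0 hind hm hb h0 h2 (edg η u W)).trans ?_
      split_ifs with hd
      · rw [prod_wt]
        refine (pow_le_pow_of_le_one hp0 hp1 (new_le_edges (η := η) (u := u) (W := W))).trans ?_
        refine weight_compare hV hp0 hD0 hρ hρ1 hnp m η _ _ (two_new_le hd) ?_
        rcases hgain with h | h
        · exact Or.inl h
        · exact Or.inr (gain_count h hη hd hend)
      · exact hR
    · push Not at hend
      obtain ⟨i, hi⟩ := hend
      have e1 : ∏ i : Fin (2 * m), ind S (W ⟨i.val * η + (η - 1), walk_bound i _ (by omega)⟩) = 0 :=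
        prod_eq_zero (mem_univ i) (by unfold ind; rw [if_neg hi])
      rw [e1, mul_zero]; exact hR
  refine (sum_le_sum fun W _ => hterm W).trans ?_
  rw [← sum_mul]
  calc _ ≤ 3 ^ (2 * m * η) * ((D * (Fintype.card V * p)) ^ (m * η) * ρ ^ m) := by
        gcongr
        exact sum_wt u S hρ hS _ hD0 hD
    _ = _ := by
      have : (3 : ℝ) ^ (2 * m * η) = 9 ^ (m * η) := by
        rw [mul_assoc, pow_mul]; norm_num
      rw [this, mul_pow _ ρ, ← pow_mul, mul_assoc 9, mul_pow 9, mul_comm η m]; ring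
end Moment
section Prob

lemma mean_mem {n k : ℕ} {p q : ℝ} (hq : 0 ≤ q) (hpq : q < p) (cl : Fin n → Fin k) (a b : Fin n) :
    0 ≤ meanMatrix n k p q cl a b ∧ meanMatrix n k p q cl a b ≤ p := by
  simp only [meanMatrix, Matrix.of_apply]
  split_ifs <;> constructor <;> linarith

lemma noise_X {Ω : Type*} [MeasureSpace Ω] [IsProbabilityMeasure (ℙ : Measure Ω)] {n k : ℕ}
    {p q : ℝ} (hq : 0 ≤ q) (hpq : q < p) (hp : p ≤ 1) {cl : Fin n → Fin k}
    {E : Ω → Matrix (Fin n) (Fin n) ℝ} (hE : NoiseModel p q cl E) :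
    ∃ X : Sym2 (Fin n) → Ω → ℝ, iIndepFun X ℙ ∧ (∀ i, Measurable (X i)) ∧
      (∀ i, ∀ᵐ ω, |X i ω| ≤ 1) ∧ (∀ i, ∫ ω, X i ω = 0) ∧ (∀ i, ∫ ω, X i ω ^ 2 ≤ p) ∧
      (∀ ω a b, E ω a b = X s(a, b) ω) := by
  obtain ⟨hsymm, hmeas, hindep, hmap⟩ := hE
  have hIntg : ∀ (f : ℝ → ℝ), Measurable f → ∀ a b : Fin n, a ≤ b →
      ∫ ω, f (E ω a b) = meanMatrix n k p q cl a b * f (1 - meanMatrix n k p q cl a b) +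
        (1 - meanMatrix n k p q cl a b) * f (-(meanMatrix n k p q cl a b)) := by
    intro f hf a b hab
    obtain ⟨hg0, hg1⟩ := mean_mem hq hpq cl a b
    rw [← integral_map (φ := fun ω => E ω a b) (hmeas a b).aemeasurable hf.aestronglyMeasurable,
      hmap a b hab, integral_add_measure, integral_smul_measure, integral_smul_measure,
      integral_dirac, integral_dirac, ENNReal.toReal_ofReal hg0,
      ENNReal.toReal_ofReal (by linarith), smul_eq_mul, smul_eq_mul]
    · exact (integrable_dirac (by simp [enorm_lt_top])).smul_measure ENNReal.ofReal_ne_top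
    · exact (integrable_dirac (by simp [enorm_lt_top])).smul_measure ENNReal.ofReal_ne_top
  refine ⟨fun e ω => E ω (Sym2.sortEquiv e).1.1 (Sym2.sortEquiv e).1.2, ?_, ?_, ?_, ?_, ?_, ?_⟩
  · exact hindep.precomp (g := Sym2.sortEquiv) Sym2.sortEquiv.injective
  · intro i; exact hmeas _ _
  · intro i
    have hab := (Sym2.sortEquiv i).2
    obtain ⟨hg0, hg1⟩ := mean_mem hq hpq cl (Sym2.sortEquiv i).1.1 (Sym2.sortEquiv i).1.2
    have hs : MeasurableSet {x : ℝ | |x| ≤ 1} := measurableSet_le (by fun_prop) (by fun_prop)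
    rw [← ae_map_iff (f := fun ω => E ω (Sym2.sortEquiv i).1.1 (Sym2.sortEquiv i).1.2)
      (p := fun x => |x| ≤ 1) (hmeas _ _).aemeasurable hs, hmap _ _ hab,
      ae_add_measure_iff]
    constructor
    · refine Measure.ae_smul_measure ?_ _
      rw [ae_dirac_iff hs, abs_le]; constructor <;> linarith
    · refine Measure.ae_smul_measure ?_ _
      rw [ae_dirac_iff hs, abs_le]; constructor <;> linarith
  · intro i
    rw [hIntg (fun x => x) measurable_id _ _ (Sym2.sortEquiv i).2]; ring
  · intro i
    obtain ⟨hg0, hg1⟩ := mean_mem hq hpq cl (Sym2.sortEquiv i).1.1 (Sym2.sortEquiv i).1.2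
    rw [hIntg (fun x => x ^ 2) (by fun_prop) _ _ (Sym2.sortEquiv i).2]
    nlinarith [mul_nonneg hg0 hg0]
  · intro ω a b
    simp only [Sym2.sortEquiv_apply_coe, Sym2.inf_mk, Sym2.sup_mk]
    rcases le_total a b with h | h
    · simp [h]
    · simp only [h, inf_of_le_right, sup_of_le_left]
      exact ((hsymm ω).apply a b).symm

lemma tail {Ω : Type*} [MeasureSpace Ω] [IsProbabilityMeasure (ℙ : Measure Ω)] {n k : ℕ}
    (hn : 0 < n)
    {p q : ℝ} (hq : 0 ≤ q) (hpq : q < p) (hp : p ≤ 1) {cl : Fin n → Fin k}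
    {E : Ω → Matrix (Fin n) (Fin n) ℝ} (hE : NoiseModel p q cl E)
    (hL : 4 ≤ Real.log n) (u : Fin n) (S : Finset (Fin n)) {ρ : ℝ} (hρ : 0 < ρ) (hρ1 : ρ ≤ 1)
    (hS : (#S : ℝ) ≤ ρ * n) (hgain : ρ = 1 ∨ u ∉ S) (η : ℕ) (hη : 0 < η)
    (hηL : (η : ℝ) ≤ Real.log n + 1) (hnp : 4 * Real.log n ^ 2 ≤ ρ * (n * p)) :
    (ℙ : Measure Ω).real {ω | Real.exp 6 * (36 * Real.log n ^ 2 * (n * p)) ^ η * ρ <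
      ((E ω ^ η *ᵥ ind S) u) ^ 2} ≤ 1 / (n : ℝ) ^ 6 := by
  obtain ⟨X, h1, h2, h3, h4, h5, h6⟩ := noise_X hq hpq hp hE
  have hp0 : 0 < p := by linarith
  set L := Real.log n with hLdef
  set m := ⌈L⌉₊ with hm
  have hm1 : L ≤ m := Nat.le_ceil _
  have hm2 : (m : ℝ) ≤ L + 1 := (Nat.ceil_lt_add_one (by linarith)).le
  have hm0 : 0 < m := Nat.ceil_pos.2 (by linarith)
  have hD : ((2 * m * η : ℕ) : ℝ) ≤ 4 * L ^ 2 := by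
    push_cast
    have : (m : ℝ) * η ≤ (L + 1) * (L + 1) := by gcongr
    nlinarith
  obtain ⟨hi, hb⟩ := moment_bound hp0.le hp h1 h2 h3 h4 h5 E h6 u S hρ hρ1
    (by simpa using hS) hgain m η hm0 hη hD (by simpa using hnp)
  simp only [Fintype.card_fin] at hb
  set K := (9 * (4 * L ^ 2) * (n * p)) ^ η * ρ with hK
  have hn' : (0 : ℝ) < n := by exact_mod_cast hn
  have hL0 : 0 < L := by linarith
  have hKpos : 0 < K := by positivity
  have hK2 : Real.exp 6 * (36 * L ^ 2 * (n * p)) ^ η * ρ = Real.exp 6 * K := by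
    rw [hK]; ring
  rw [hK2]
  have hmk := mul_meas_ge_le_integral_of_nonneg (μ := (ℙ : Measure Ω))
    (Filter.Eventually.of_forall fun ω => by
      show (0 : ℝ) ≤ ((E ω ^ η *ᵥ ind S) u) ^ (2 * m)
      rw [pow_mul]; positivity) hi ((Real.exp 6 * K) ^ m)
  have hsub : (ℙ : Measure Ω).real {ω | Real.exp 6 * K < ((E ω ^ η *ᵥ ind S) u) ^ 2} ≤
      (ℙ : Measure Ω).real {ω | (Real.exp 6 * K) ^ m ≤ ((E ω ^ η *ᵥ ind S) u) ^ (2 * m)} := by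
    refine measureReal_mono fun ω hω => ?_
    have hω' : Real.exp 6 * K < ((E ω ^ η *ᵥ ind S) u) ^ 2 := hω
    show (Real.exp 6 * K) ^ m ≤ ((E ω ^ η *ᵥ ind S) u) ^ (2 * m)
    rw [pow_mul]
    exact pow_le_pow_left₀ (by positivity) hω'.le m
  have hexp : (n : ℝ) ^ 6 ≤ Real.exp 6 ^ m := by
    have e1 : (n : ℝ) = Real.exp L := (Real.exp_log hn').symm
    rw [e1, ← Real.exp_nat_mul, ← Real.exp_nat_mul]
    apply Real.exp_le_exp.2
    push_cast; linarith
  have hall := hmk.trans hb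
  have hR := measureReal_nonneg (μ := (ℙ : Measure Ω))
    (s := {ω | (Real.exp 6 * K) ^ m ≤ ((E ω ^ η *ᵥ ind S) u) ^ (2 * m)})
  set R := (ℙ : Measure Ω).real {ω | (Real.exp 6 * K) ^ m ≤ ((E ω ^ η *ᵥ ind S) u) ^ (2 * m)}
  have h7 : Real.exp 6 ^ m * R ≤ 1 := by
    have hKm : 0 < K ^ m := by positivity
    rw [mul_pow] at hall
    have : K ^ m * (Real.exp 6 ^ m * R) ≤ K ^ m * 1 := by linarith
    exact le_of_mul_le_mul_left this hKm
  refine hsub.trans ?_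
  rw [le_div_iff₀ (by positivity)]
  nlinarith

end Prob

section Spec

/-- cluster sums -/
def xs {n k : ℕ} (cl : Fin n → Fin k) (z : Fin n → ℝ) (c : Fin k) : ℝ :=
  ∑ v, if cl v = c then z v else 0

lemma sum_xs {n k : ℕ} (cl : Fin n → Fin k) (z : Fin n → ℝ) : ∑ c, xs cl z c = ∑ v, z v := by
  unfold xs
  rw [sum_comm]
  simp

lemma sum_cl {n k : ℕ} (cl : Fin n → Fin k) (f : Fin k → ℝ) :
    ∑ w, f (cl w) = ∑ c, (clusterSize cl c : ℝ) * f c := by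
  have : ∀ w, f (cl w) = ∑ c, if cl w = c then f c else 0 := by intro w; simp
  simp only [this]
  rw [sum_comm]
  refine sum_congr rfl fun c _ => ?_
  rw [← sum_filter, sum_const, nsmul_eq_mul]; rfl

lemma sum_cl_mul {n k : ℕ} (cl : Fin n → Fin k) (z : Fin n → ℝ) (f : Fin k → ℝ) :
    ∑ w, z w * f (cl w) = ∑ c, xs cl z c * f c := by
  have : ∀ w, z w * f (cl w) = ∑ c, if cl w = c then z w * f c else 0 := by intro w; simp
  simp only [this]
  rw [sum_comm]
  refine sum_congr rfl fun c _ => ?_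
  unfold xs
  rw [sum_mul]
  refine sum_congr rfl fun w _ => ?_
  split_ifs <;> simp

lemma vecMul_mean {n k : ℕ} (p q : ℝ) (cl : Fin n → Fin k) (z : Fin n → ℝ) (w : Fin n) :
    (z ᵥ* meanMatrix n k p q cl) w = q * ∑ v, z v + (p - q) * xs cl z (cl w) := by
  simp only [vecMul, dotProduct, meanMatrix, Matrix.of_apply, xs]
  rw [mul_sum, mul_sum, ← sum_add_distrib]
  refine sum_congr rfl fun v _ => ?_
  split_ifs <;> ring

lemma quad_mean {n k : ℕ} (p q : ℝ) (cl : Fin n → Fin k) (z : Fin n → ℝ) :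
    z ⬝ᵥ (z ᵥ* meanMatrix n k p q cl) = q * (∑ v, z v) ^ 2 + (p - q) * ∑ c, xs cl z c ^ 2 := by
  simp only [dotProduct, vecMul_mean, mul_add, sum_add_distrib]
  congr 1
  · rw [← sum_mul]; ring
  · have := sum_cl_mul cl z (fun c => (p - q) * xs cl z c)
    rw [this, mul_sum]
    exact sum_congr rfl fun c _ => by ring

lemma sum_xs_sq_le {n k : ℕ} (cl : Fin n → Fin k) (z : Fin n → ℝ) {B : ℝ}
    (hB : ∀ c, (clusterSize cl c : ℝ) ≤ B) : ∑ c, xs cl z c ^ 2 ≤ B * (z ⬝ᵥ z) := by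
  have h1 : ∀ c, xs cl z c ^ 2 ≤ B * xs cl (fun v => z v * z v) c := by
    intro c
    unfold xs
    rw [← sum_filter, ← sum_filter]
    refine (sq_sum_le_card_mul_sum_sq).trans ?_
    have : ∑ i with cl i = c, z i ^ 2 = ∑ i with cl i = c, z i * z i :=
      sum_congr rfl fun i _ => by ring
    rw [this]
    exact mul_le_mul_of_nonneg_right (hB c) (sum_nonneg fun i _ => mul_self_nonneg _)
  refine (sum_le_sum fun c _ => h1 c).trans ?_
  rw [← mul_sum, sum_xs]; rfl

variable {n k : ℕ} {p q : ℝ} {cl : Fin n → Fin k} {lam : Fin n → ℝ} {v : Fin n → Fin n → ℝ}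

lemma parseval {G : Matrix (Fin n) (Fin n) ℝ} (hd : IsSpectralDecomp G lam v) (z : Fin n → ℝ) :
    ∑ i, (v i ⬝ᵥ z) ^ 2 = z ⬝ᵥ z := by
  have h1 : (Matrix.of v) * (Matrix.of v)ᵀ = 1 := by
    ext i j
    rw [Matrix.mul_apply, Matrix.one_apply]
    exact hd.2.1 i j
  have h2 := mul_eq_one_comm.1 h1
  have h3 : ∑ i, (v i ⬝ᵥ z) ^ 2 = ((Matrix.of v) *ᵥ z) ⬝ᵥ ((Matrix.of v) *ᵥ z) := by
    simp only [dotProduct, mulVec, Matrix.of_apply, sq]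
  rw [h3, dotProduct_mulVec, ← mulVec_transpose, mulVec_mulVec, h2, one_mulVec]

lemma coef_vecMul {G : Matrix (Fin n) (Fin n) ℝ} (hd : IsSpectralDecomp G lam v) (z : Fin n → ℝ)
    (i : Fin n) : v i ⬝ᵥ (z ᵥ* G) = lam i * (v i ⬝ᵥ z) := by
  have h1 : z ᵥ* G = ∑ j, (lam j * (v j ⬝ᵥ z)) • v j := by
    conv_lhs => rw [hd.2.2]
    ext w
    simp only [vecMul, dotProduct, Matrix.sum_apply, Matrix.smul_apply, vecMulVec_apply,
      smul_eq_mul, Finset.sum_apply, Pi.smul_apply, mul_sum]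
    rw [sum_comm]
    refine sum_congr rfl fun j _ => ?_
    rw [sum_mul]
    exact sum_congr rfl fun a _ => by ring
  rw [h1, dotProduct_sum]
  simp only [dotProduct_smul, hd.2.1, smul_eq_mul, mul_ite, mul_one, mul_zero, sum_ite_eq, mem_univ,
    if_true]

lemma lam_eq {G : Matrix (Fin n) (Fin n) ℝ} (hd : IsSpectralDecomp G lam v) (i : Fin n) :
    v i ⬝ᵥ (v i ᵥ* G) = lam i := by
  rw [coef_vecMul hd, hd.2.1]; simp

lemma quad_lam {G : Matrix (Fin n) (Fin n) ℝ} (hd : IsSpectralDecomp G lam v) {i j : Fin n}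
    (hij : i ≠ j) (a b : ℝ) :
    (a • v i + b • v j) ⬝ᵥ ((a • v i + b • v j) ᵥ* G) = a ^ 2 * lam i + b ^ 2 * lam j := by
  have h : ∀ i j, v i ⬝ᵥ v j = if i = j then (1 : ℝ) else 0 := hd.2.1
  rw [add_dotProduct, smul_dotProduct, smul_dotProduct, coef_vecMul hd, coef_vecMul hd,
    dotProduct_add, dotProduct_add, dotProduct_smul, dotProduct_smul, dotProduct_smul,
    dotProduct_smul, h i i, h i j, h j i, h j j]
  simp [hij, hij.symm]; ring

lemma lam_nonneg (hq : 0 ≤ q) (hpq : q < p)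
    (hd : IsSpectralDecomp (meanMatrix n k p q cl) lam v) (i : Fin n) : 0 ≤ lam i := by
  rw [← lam_eq hd, quad_mean]
  have : 0 ≤ ∑ c, xs cl (v i) c ^ 2 := sum_nonneg fun _ _ => sq_nonneg _
  have := mul_nonneg (sub_nonneg.2 hpq.le) this
  positivity

lemma lam_zero_pos (hn : 0 < n) (hq : 0 ≤ q) (hpq : q < p)
    (hd : IsSpectralDecomp (meanMatrix n k p q cl) lam v) : 0 < lam ⟨0, hn⟩ := by
  rcases (lam_nonneg hq hpq hd ⟨0, hn⟩).lt_or_eq with h | h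
  · exact h
  · exfalso
    have h0 : ∀ i, lam i = 0 := fun i =>
      le_antisymm ((hd.1 (show (⟨0, hn⟩ : Fin n) ≤ i from Nat.zero_le _)).trans h.symm.le)
        (lam_nonneg hq hpq hd i)
    have h1 := hd.2.2
    simp only [h0, zero_smul, sum_const_zero] at h1
    have h2 := congrFun (congrFun h1 ⟨0, hn⟩) ⟨0, hn⟩
    simp [meanMatrix] at h2
    linarith

lemma lam_le (hn : 0 < n) (hq : 0 ≤ q) (hpq : q < p) {B : ℝ}
    (hB : ∀ c, (clusterSize cl c : ℝ) ≤ B)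
    (hd : IsSpectralDecomp (meanMatrix n k p q cl) lam v) (i : Fin n) (hi : i ≠ ⟨0, hn⟩) :
    lam i ≤ (p - q) * B := by
  have key : ∀ z : Fin n → ℝ, ∑ w, z w = 0 →
      z ⬝ᵥ (z ᵥ* meanMatrix n k p q cl) ≤ (p - q) * B * (z ⬝ᵥ z) := by
    intro z hz
    rw [quad_mean, hz, mul_assoc]
    have := mul_le_mul_of_nonneg_left (sum_xs_sq_le cl z hB) (sub_nonneg.2 hpq.le)
    simpa using this
  have h : ∀ i j, v i ⬝ᵥ v j = if i = j then (1 : ℝ) else 0 := hd.2.1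
  have hle : lam i ≤ lam ⟨0, hn⟩ := hd.1 (show (⟨0, hn⟩ : Fin n) ≤ i from Nat.zero_le _)
  set a := ∑ w, v i w with ha
  set b := ∑ w, v ⟨0, hn⟩ w with hb
  by_cases h0 : a = 0
  · have := key (v i) (by rw [← ha, h0])
    rw [lam_eq hd, h i i] at this
    simpa using this
  · have h1 := key (a • v ⟨0, hn⟩ + (-b) • v i) (by
      simp only [Pi.add_apply, Pi.smul_apply, smul_eq_mul, sum_add_distrib, ← mul_sum]
      rw [← ha, ← hb]; ring)
    rw [quad_lam hd hi.symm] at h1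
    have h2 : (a • v ⟨0, hn⟩ + (-b) • v i) ⬝ᵥ (a • v ⟨0, hn⟩ + (-b) • v i) = a ^ 2 + b ^ 2 := by
      rw [add_dotProduct, smul_dotProduct, smul_dotProduct,
        dotProduct_add, dotProduct_add, dotProduct_smul, dotProduct_smul, dotProduct_smul,
        dotProduct_smul, h _ _, h _ _, h _ _, h i i]
      simp [hi, hi.symm]; ring
    rw [h2] at h1
    have ha2 : 0 < a ^ 2 := by positivity
    have : (a ^ 2 + b ^ 2) * lam i ≤ (a ^ 2 + b ^ 2) * ((p - q) * B) := by
      nlinarith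
    exact le_of_mul_le_mul_left this (by positivity)

/-- cluster average of a vector -/
noncomputable def avg (cl : Fin n → Fin k) (y : Fin n → ℝ) : Fin n → ℝ :=
  fun w => xs cl y (cl w) / clusterSize cl (cl w)

lemma xs_avg (hs : ∀ c, 0 < (clusterSize cl c : ℝ)) (y : Fin n → ℝ) (c : Fin k) :
    xs cl (avg cl y) c = xs cl y c := by
  have h1 : xs cl (avg cl y) c = ∑ w, (fun c' => if c' = c then xs cl y c / clusterSize cl c else 0) (cl w) := by
    conv_lhs => unfold xs
    refine sum_congr rfl fun w _ => ?_
    by_cases h : cl w = c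
    · simp [h, avg]
    · simp [h]
  refine h1.trans ((sum_cl cl (fun c' => if c' = c then xs cl y c / clusterSize cl c else 0)).trans ?_)
  simp only [mul_ite, mul_zero, sum_ite_eq', mem_univ, if_true]
  have := (hs c).ne'
  field_simp

lemma avg_sq (hs : ∀ c, 0 < (clusterSize cl c : ℝ)) (y : Fin n → ℝ) :
    avg cl y ⬝ᵥ avg cl y = ∑ c, xs cl y c ^ 2 / clusterSize cl c := by
  have h1 : avg cl y ⬝ᵥ avg cl y =
      ∑ w, (fun c => (xs cl y c / clusterSize cl c) ^ 2) (cl w) := by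
    simp only [dotProduct, avg]
    exact sum_congr rfl fun w _ => by ring
  refine h1.trans ((sum_cl cl (fun c => (xs cl y c / clusterSize cl c) ^ 2)).trans ?_)
  refine sum_congr rfl fun c _ => ?_
  have := (hs c).ne'
  field_simp

lemma avg_vecMul (hs : ∀ c, 0 < (clusterSize cl c : ℝ)) (y : Fin n → ℝ) :
    avg cl y ᵥ* meanMatrix n k p q cl = y ᵥ* meanMatrix n k p q cl := by
  ext w
  rw [vecMul_mean, vecMul_mean, xs_avg hs, ← sum_xs cl (avg cl y), ← sum_xs cl y]
  simp only [xs_avg hs]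

lemma G_bound (hn : 0 < n) (hq : 0 ≤ q) (hpq : q < p) (hs : ∀ c, 0 < (clusterSize cl c : ℝ))
    (hd : IsSpectralDecomp (meanMatrix n k p q cl) lam v) (y : Fin n → ℝ) :
    (y ᵥ* meanMatrix n k p q cl) ⬝ᵥ (y ᵥ* meanMatrix n k p q cl) ≤
      lam ⟨0, hn⟩ ^ 2 * ∑ c, xs cl y c ^ 2 / clusterSize cl c := by
  rw [← avg_vecMul hs, ← avg_sq hs, ← parseval hd, ← parseval hd (avg cl y), mul_sum]
  refine sum_le_sum fun i _ => ?_
  rw [coef_vecMul hd, mul_pow]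
  have h1 := lam_nonneg hq hpq hd i
  have h2 : lam i ≤ lam ⟨0, hn⟩ := hd.1 (show (⟨0, hn⟩ : Fin n) ≤ i from Nat.zero_le _)
  gcongr

lemma psi_bound (hn : 0 < n) (hq : 0 ≤ q) (hpq : q < p) (hs : ∀ c, 0 < (clusterSize cl c : ℝ))
    {μ : ℝ} (hμ : 0 < μ) (hB : ∀ c, (p - q) * (clusterSize cl c : ℝ) ≤ 2 * μ)
    (hd : IsSpectralDecomp (meanMatrix n k p q cl) lam v) (y : Fin n → ℝ) :
    (y ᵥ* psiM (lam ⟨0, hn⟩) μ (meanMatrix n k p q cl)) ⬝ᵥ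
      (y ᵥ* psiM (lam ⟨0, hn⟩) μ (meanMatrix n k p q cl)) ≤
      9 * ∑ c, xs cl y c ^ 2 / clusterSize cl c := by
  have hl := lam_zero_pos hn hq hpq hd
  have e0 : y ᵥ* psiM (lam ⟨0, hn⟩) μ (meanMatrix n k p q cl) =
      avg cl y ᵥ* psiM (lam ⟨0, hn⟩) μ (meanMatrix n k p q cl) := by
    unfold psiM
    simp only [vecMul_add, vecMul_smul, ← vecMul_vecMul, avg_vecMul hs]
  rw [e0, ← avg_sq hs, ← parseval hd, ← parseval hd (avg cl y), mul_sum]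
  refine sum_le_sum fun i _ => ?_
  have e1 : v i ⬝ᵥ (avg cl y ᵥ* psiM (lam ⟨0, hn⟩) μ (meanMatrix n k p q cl)) =
      (-(1 / (lam ⟨0, hn⟩ * μ)) * (lam i * lam i) + (1 / lam ⟨0, hn⟩ + 1 / μ) * lam i) *
        (v i ⬝ᵥ avg cl y) := by
    unfold psiM
    simp only [vecMul_add, vecMul_smul, ← vecMul_vecMul, dotProduct_add, dotProduct_smul,
      coef_vecMul hd, smul_eq_mul]
    ring
  rw [e1, mul_pow]
  refine mul_le_mul_of_nonneg_right ?_ (sq_nonneg _)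
  set l := lam ⟨0, hn⟩ with hldef
  have h1 := lam_nonneg hq hpq hd i
  have h2 : lam i ≤ l := hd.1 (show (⟨0, hn⟩ : Fin n) ≤ i from Nat.zero_le _)
  have e2 : -(1 / (l * μ)) * (lam i * lam i) + (1 / l + 1 / μ) * lam i =
      lam i / l + (lam i / μ) * (1 - lam i / l) := by
    field_simp; ring
  rw [e2]
  have a1 : 0 ≤ lam i / l := by positivity
  have a2 : lam i / l ≤ 1 := by rw [div_le_one hl]; exact h2
  have a3 : 0 ≤ lam i / μ := by positivity
  have key : 0 ≤ lam i / l + (lam i / μ) * (1 - lam i / l) ∧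
      lam i / l + (lam i / μ) * (1 - lam i / l) ≤ 3 := by
    by_cases hi : i = ⟨0, hn⟩
    · have : lam i / l = 1 := by rw [hi, ← hldef]; field_simp
      rw [this]; constructor <;> norm_num
    · have h3 : lam i ≤ (p - q) * (2 * μ / (p - q)) := lam_le hn hq hpq (fun c => by
        rw [le_div_iff₀ (by linarith)]; linarith [hB c]) hd i hi
      rw [mul_div_cancel₀ _ (by linarith : p - q ≠ 0)] at h3
      have a4 : lam i / μ ≤ 2 := by rw [div_le_iff₀ hμ]; exact h3
      constructor
      · have := mul_nonneg a3 (sub_nonneg.2 a2); linarith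
      · nlinarith
  nlinarith [key.1, key.2]

end Spec

section Det

lemma enorm_eq_norm {n : ℕ} (x : Fin n → ℝ) : enorm x = ‖(WithLp.toLp 2 x : EuclideanSpace ℝ (Fin n))‖ := by
  rw [EuclideanSpace.norm_eq]; simp [enorm]

lemma enorm_nonneg' {n : ℕ} (x : Fin n → ℝ) : 0 ≤ enorm x := Real.sqrt_nonneg _

lemma enorm_add_le {n : ℕ} (x y : Fin n → ℝ) : enorm (x + y) ≤ enorm x + enorm y := by
  simp only [enorm_eq_norm, WithLp.toLp_add]; exact norm_add_le _ _

lemma enorm_smul {n : ℕ} (a : ℝ) (x : Fin n → ℝ) : enorm (a • x) = |a| * enorm x := by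
  simp only [enorm_eq_norm, WithLp.toLp_smul, norm_smul, Real.norm_eq_abs]

lemma enorm_le_of_dot {n : ℕ} {x : Fin n → ℝ} {r : ℝ} (hr : 0 ≤ r) (h : x ⬝ᵥ x ≤ r ^ 2) :
    enorm x ≤ r := by
  unfold enorm
  refine Real.sqrt_le_iff.2 ⟨hr, ?_⟩
  simpa [dotProduct, sq] using h

lemma enorm_vecMul_le {n : ℕ} {M : Matrix (Fin n) (Fin n) ℝ} (hM : M.IsSymm) (x : Fin n → ℝ) :
    enorm (x ᵥ* M) ≤ specNorm M * enorm x := by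
  have : x ᵥ* M = M *ᵥ x := by
    conv_rhs => rw [← hM.eq]
    rw [mulVec_transpose]
  rw [this, enorm_eq_norm, enorm_eq_norm]
  exact (Matrix.toEuclideanCLM (𝕜 := ℝ) M).le_opNorm (WithLp.toLp 2 x)

lemma specNorm_le_entries {n : ℕ} {M : Matrix (Fin n) (Fin n) ℝ} {b : ℝ} (hb : 0 ≤ b)
    (h : ∀ u v, (M u v) ^ 2 ≤ b ^ 2) : specNorm M ≤ n * b := by
  refine ContinuousLinearMap.opNorm_le_bound _ (by positivity) fun x => ?_
  have e1 : ‖Matrix.toEuclideanCLM (𝕜 := ℝ) M x‖ = enorm (M *ᵥ x.ofLp) := by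
    rw [enorm_eq_norm]; rfl
  have e2 : ‖x‖ = enorm x.ofLp := by rw [enorm_eq_norm]
  rw [e1, e2]
  unfold enorm
  refine Real.sqrt_le_iff.2 ⟨by positivity, ?_⟩
  rw [mul_pow, Real.sq_sqrt (sum_nonneg fun _ _ => sq_nonneg _)]
  calc ∑ i, ((M *ᵥ x.ofLp) i) ^ 2 ≤ ∑ i : Fin n, (n * b ^ 2) * ∑ j, x.ofLp j ^ 2 := by
        refine sum_le_sum fun i _ => ?_
        refine (sum_mul_sq_le_sq_mul_sq univ (fun j => M i j) x.ofLp).trans ?_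
        refine mul_le_mul_of_nonneg_right ?_ (sum_nonneg fun _ _ => sq_nonneg _)
        refine (sum_le_sum fun j _ => h i j).trans ?_
        simp
    _ = _ := by simp; ring

lemma specNorm_pow {n : ℕ} {M : Matrix (Fin n) (Fin n) ℝ} (hM : M.IsSymm) (j : ℕ) :
    specNorm (M ^ 2 ^ j) = specNorm M ^ 2 ^ j := by
  unfold specNorm
  rw [map_pow]
  refine IsSelfAdjoint.norm_pow_two_pow ?_ j
  rw [IsSelfAdjoint, ← map_star]
  rw [star_eq_conjTranspose, conjTranspose_eq_transpose_of_trivial, hM.eq]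

lemma exp_three_le : Real.exp 3 ≤ 20.1 := by
  have h : Real.exp 3 = Real.exp 1 ^ 3 := by rw [← Real.exp_nat_mul]; norm_num
  rw [h]
  have := Real.exp_one_lt_d9
  calc Real.exp 1 ^ 3 ≤ 2.7182818286 ^ 3 := by gcongr
    _ ≤ _ := by norm_num

lemma exp_five_le : Real.exp 5 ≤ 150 := by
  have h : Real.exp 5 = Real.exp 1 ^ 5 := by rw [← Real.exp_nat_mul]; norm_num
  rw [h]
  have := Real.exp_one_lt_d9
  calc Real.exp 1 ^ 5 ≤ 2.7182818286 ^ 5 := by gcongr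
    _ ≤ _ := by norm_num

lemma specNorm_le {n : ℕ} {M : Matrix (Fin n) (Fin n) ℝ} (hM : M.IsSymm) (hn : 0 < n)
    (hL : 1 ≤ Real.log n) {T : ℝ} (hT : 0 ≤ T)
    (h : ∀ η : ℕ, 0 < η → (η : ℝ) ≤ Real.log n + 1 → ∀ u v,
      ((M ^ η) u v) ^ 2 ≤ (Real.exp 3 * T ^ η) ^ 2) : specNorm M ≤ 150 * T := by
  set m := ⌊Real.log n⌋₊ with hm
  have hm1 : 1 ≤ m := Nat.le_floor (by simpa using hL)
  set j := Nat.log 2 m with hj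
  have h1 : 2 ^ j ≤ m := Nat.pow_log_le_self 2 (by omega)
  have h2 : m < 2 ^ (j + 1) := Nat.lt_pow_succ_log_self (by norm_num) m
  set N := 2 ^ j with hN
  have hN0 : 0 < N := by positivity
  have hNL : (N : ℝ) ≤ Real.log n := (Nat.cast_le.2 h1).trans (Nat.floor_le (by linarith))
  have hNL2 : Real.log n ≤ 2 * N := by
    have : Real.log n < m + 1 := Nat.lt_floor_add_one _
    have h3 : m + 1 ≤ 2 * N := by rw [pow_succ] at h2; omega
    have : ((m + 1 : ℕ) : ℝ) ≤ ((2 * N : ℕ) : ℝ) := Nat.cast_le.2 h3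
    push_cast at this
    linarith
  have hs := specNorm_le_entries (M := M ^ N) (b := Real.exp 3 * T ^ N) (by positivity)
    (fun u v => h N hN0 (by linarith) u v)
  rw [specNorm_pow hM] at hs
  have hn' : (n : ℝ) ≤ Real.exp 2 ^ N := by
    rw [← Real.exp_nat_mul]
    calc (n : ℝ) = Real.exp (Real.log n) :=
          (Real.exp_log (show (0 : ℝ) < n by exact_mod_cast hn)).symm
      _ ≤ _ := Real.exp_le_exp.2 (by linarith)
  have he : Real.exp 3 ≤ Real.exp 3 ^ N := le_self_pow₀ (Real.one_le_exp (by norm_num)) hN0.ne'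
  have h5 : specNorm M ^ N ≤ (Real.exp 5 * T) ^ N := by
    refine hs.trans ?_
    calc (n : ℝ) * (Real.exp 3 * T ^ N) ≤ Real.exp 2 ^ N * (Real.exp 3 ^ N * T ^ N) := by gcongr
      _ = (Real.exp 5 * T) ^ N := by
        rw [← mul_pow, ← mul_pow, ← mul_assoc, ← Real.exp_add]; norm_num
  have h6 : specNorm M ≤ Real.exp 5 * T :=
    le_of_pow_le_pow_left₀ hN0.ne' (by positivity) h5
  exact h6.trans (mul_le_mul_of_nonneg_right exp_five_le hT)

variable {n k : ℕ} {p q : ℝ} {cl : Fin n → Fin k}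

/-- the vertices of a cluster -/
def cset (cl : Fin n → Fin k) (c : Fin k) : Finset (Fin n) := Finset.univ.filter fun v => cl v = c

lemma xs_row (M : Matrix (Fin n) (Fin n) ℝ) (u : Fin n) (c : Fin k) :
    xs cl (M u) c = (M *ᵥ ind (cset cl c)) u := by
  simp [xs, mulVec, dotProduct, ind, cset]

lemma beta_bound (hk : 2 ≤ k) (hn : 0 < n) (M : Matrix (Fin n) (Fin n) ℝ) (u : Fin n) {W : ℝ}
    (hs : ∀ c, (n : ℝ) / (2 * k) ≤ clusterSize cl c) (hW : 0 ≤ W)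
    (h : ∀ c, ((M *ᵥ ind (cset cl c)) u) ^ 2 ≤ W * (if c = cl u then (1 : ℝ) else 2 / (k : ℝ))) :
    ∑ c, xs cl (M u) c ^ 2 / clusterSize cl c ≤ 6 * (k / n) * W := by
  have hk0 : (0 : ℝ) < k := by positivity
  have hn0 : (0 : ℝ) < n := by positivity
  have hpos : (0 : ℝ) < n / (2 * k) := by positivity
  calc ∑ c, xs cl (M u) c ^ 2 / clusterSize cl c
      ≤ ∑ c, (W * ((if c = cl u then 1 else 0) + 2 / k)) / (n / (2 * k)) := by
        refine sum_le_sum fun c _ => ?_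
        rw [xs_row]
        have h1 := h c
        have h2 : W * (if c = cl u then 1 else 2 / (k : ℝ)) ≤
            W * ((if c = cl u then 1 else 0) + 2 / k) := by
          refine mul_le_mul_of_nonneg_left ?_ hW
          have : (0 : ℝ) ≤ 2 / k := by positivity
          split_ifs <;> linarith
        exact div_le_div₀ ((sq_nonneg _).trans (h1.trans h2)) (h1.trans h2) hpos (hs c)
    _ = _ := by
        rw [← sum_div, ← mul_sum, sum_add_distrib]
        simp
        field_simp
        ring

lemma n2i_le (hn : 0 < n) {M : Matrix (Fin n) (Fin n) ℝ} {r : ℝ} (h : ∀ u, enorm (M u) ≤ r) :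
    n2i M ≤ r := by
  have : Nonempty (Fin n) := ⟨⟨0, hn⟩⟩
  exact ciSup_le h

lemma row_mul (M N : Matrix (Fin n) (Fin n) ℝ) (u : Fin n) : (M * N) u = M u ᵥ* N := by
  ext w; rfl

lemma det_bound (hk : 2 ≤ k) (hn : 0 < n) (hq : 0 ≤ q) (hpq : q < p)
    (hbal : Balanced n k cl) (hL : 4 ≤ Real.log n)
    {lam : Fin n → ℝ} {v : Fin n → Fin n → ℝ}
    (hd : IsSpectralDecomp (meanMatrix n k p q cl) lam v)
    (hT : 36 * Real.log n ^ 2 * (n * p) ≤ ((p - q) * ((n : ℝ) / k)) ^ 2)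
    {M : Matrix (Fin n) (Fin n) ℝ} (hM : M.IsSymm)
    (hX : ∀ η : ℕ, 0 < η → (η : ℝ) ≤ Real.log n + 1 → ∀ u c,
      ((M ^ η *ᵥ ind (cset cl c)) u) ^ 2 ≤ Real.exp 6 * (36 * Real.log n ^ 2 * (n * p)) ^ η *
        (if c = cl u then (1 : ℝ) else 2 / (k : ℝ)))
    (hY : ∀ η : ℕ, 0 < η → (η : ℝ) ≤ Real.log n + 1 → ∀ u w,
      ((M ^ η) u w) ^ 2 ≤ Real.exp 6 * (36 * Real.log n ^ 2 * (n * p)) ^ η)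
    (η : ℕ) (hη : 1 ≤ η) (hηL : (η : ℝ) ≤ Real.log n) :
    n2i (M ^ η * ((-(1 / (lam ⟨0, hn⟩ * ((p - q) * ((n : ℝ) / k))))) •
        (M * meanMatrix n k p q cl + meanMatrix n k p q cl * M))) ≤
      1000000 * Real.sqrt ((k : ℝ) * p) * (100 * Real.sqrt ((n : ℝ) * p)) ^ (η - 1) *
        (Real.log n) ^ (5 * η) ∧
    n2i (M ^ η * psiM (lam ⟨0, hn⟩) ((p - q) * ((n : ℝ) / k)) (meanMatrix n k p q cl)) ≤
      1000000 * Real.sqrt ((k : ℝ) * p) * (100 * Real.sqrt ((n : ℝ) * p)) ^ (η - 1) *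
        (Real.log n) ^ (5 * η) := by
  have hp0 : 0 < p := by linarith
  have hk0 : (0 : ℝ) < k := by positivity
  have hn0 : (0 : ℝ) < n := by positivity
  have hpq' : 0 < p - q := by linarith
  set l := Real.log n with hl
  set μ := (p - q) * ((n : ℝ) / k) with hμd
  have hμ : 0 < μ := by positivity
  set R := Real.sqrt ((n : ℝ) * p) with hR
  set Q := Real.sqrt ((k : ℝ) * p) with hQ
  have hR0 : 0 ≤ R := Real.sqrt_nonneg _
  have hQ0 : 0 ≤ Q := Real.sqrt_nonneg _
  have hR2 : R ^ 2 = n * p := Real.sq_sqrt (by positivity)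
  have hQ2 : Q ^ 2 = k * p := Real.sq_sqrt (by positivity)
  set T := 6 * l * R with hTd
  have hT0 : 0 ≤ T := by positivity
  have hT2 : 36 * l ^ 2 * (n * p) = T ^ 2 := by rw [hTd, ← hR2]; ring
  rw [hT2] at hT hX hY
  clear_value T
  have hTμ : T ≤ μ := by
    exact le_of_pow_le_pow_left₀ two_ne_zero hμ.le hT
  -- cluster sizes
  have hε : 1 / (16 * l) ≤ 1 / 2 := by
    apply one_div_le_one_div_of_le <;> linarith
  have hnk : 0 < (n : ℝ) / k := by positivity
  have hs1 : ∀ c, (n : ℝ) / (2 * k) ≤ clusterSize cl c := by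
    intro c
    refine le_trans ?_ (hbal c).1
    have : (n : ℝ) / (2 * k) = 1 / 2 * (n / k) := by field_simp
    rw [this]
    exact mul_le_mul_of_nonneg_right (by linarith) hnk.le
  have hs2 : ∀ c, (clusterSize cl c : ℝ) ≤ 2 * (n / k) := by
    intro c
    refine (hbal c).2.trans ?_
    exact mul_le_mul_of_nonneg_right (by linarith) hnk.le
  have hs : ∀ c, 0 < (clusterSize cl c : ℝ) := fun c => lt_of_lt_of_le (by positivity) (hs1 c)
  have hB : ∀ c, (p - q) * (clusterSize cl c : ℝ) ≤ 2 * μ := by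
    intro c
    have := mul_le_mul_of_nonneg_left (hs2 c) hpq'.le
    rw [hμd]; linarith
  have hlam := lam_zero_pos hn hq hpq hd
  -- exponentials
  have he : Real.exp 6 = Real.exp 3 ^ 2 := by rw [← Real.exp_nat_mul]; norm_num
  have he2 : Real.exp 6 ≤ 404.01 := by
    rw [he]
    calc Real.exp 3 ^ 2 ≤ 20.1 ^ 2 := by gcongr; exact exp_three_le
      _ ≤ _ := by norm_num
  have hnorm : specNorm M ≤ 150 * T := by
    refine specNorm_le hM hn (by linarith) hT0 fun η h0 h1 u w => ?_
    refine (hY η h0 h1 u w).trans (le_of_eq ?_)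
    rw [he, mul_pow, ← pow_mul, ← pow_mul, mul_comm 2 η]
  have hβ : ∀ (m : ℕ), ((m + 1 : ℕ) : ℝ) ≤ l + 1 → ∀ u,
      ∑ c, xs cl ((M ^ (m + 1)) u) c ^ 2 / clusterSize cl c ≤ (300 * l * Q * T ^ m) ^ 2 := by
    intro m hm u
    refine (beta_bound hk hn (M ^ (m + 1)) u hs1 (by positivity)
      (hX (m + 1) (Nat.succ_pos _) hm u)).trans ?_
    have e1 : 6 * ((k : ℝ) / n) * (Real.exp 6 * (T ^ 2) ^ (m + 1)) =
        (216 * Real.exp 6) * (l * Q * T ^ m) ^ 2 := by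
      have e0 : (T ^ 2) ^ (m + 1) = (T ^ m) ^ 2 * (36 * l ^ 2 * (n * p)) := by rw [hT2]; ring
      rw [e0, mul_pow, mul_pow, hQ2]
      field_simp
      ring
    rw [e1]
    calc (216 * Real.exp 6) * (l * Q * T ^ m) ^ 2 ≤ 90000 * (l * Q * T ^ m) ^ 2 := by
          gcongr; linarith
      _ = _ := by ring
  obtain ⟨m, rfl⟩ : ∃ m, η = m + 1 := ⟨η - 1, by omega⟩
  simp only [Nat.add_sub_cancel]
  -- final comparison
  have hfin : 50000 * l * Q * T ^ m ≤
      1000000 * Q * (100 * R) ^ m * l ^ (5 * (m + 1)) := by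
    have h1 : T ^ m ≤ (100 * R) ^ m * l ^ m := by
      rw [← mul_pow]
      gcongr
      rw [hTd]
      nlinarith [mul_nonneg (by linarith : 0 ≤ l) hR0]
    have h2 : l * l ^ m ≤ l ^ (5 * (m + 1)) := by
      rw [← pow_succ']
      exact pow_le_pow_right₀ (by linarith) (by omega)
    calc 50000 * l * Q * T ^ m ≤ 50000 * l * Q * ((100 * R) ^ m * l ^ m) := by gcongr
      _ = 50000 * Q * (100 * R) ^ m * (l * l ^ m) := by ring
      _ ≤ 1000000 * Q * (100 * R) ^ m * l ^ (5 * (m + 1)) := by gcongr; norm_num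
  have hm1 : ((m + 1 : ℕ) : ℝ) ≤ l + 1 := by linarith
  have hm2 : ((m + 1 + 1 : ℕ) : ℝ) ≤ l + 1 := by push_cast at hηL ⊢; linarith
  have hX0 : 0 ≤ l * Q * T ^ m := by positivity
  constructor
  · refine n2i_le hn fun u => ?_
    refine le_trans ?_ hfin
    have hrow : (M ^ (m + 1) * ((-(1 / (lam ⟨0, hn⟩ * μ))) •
        (M * meanMatrix n k p q cl + meanMatrix n k p q cl * M))) u =
        (-(1 / (lam ⟨0, hn⟩ * μ))) • (((M ^ (m + 1 + 1)) u ᵥ* meanMatrix n k p q cl) +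
          ((M ^ (m + 1)) u ᵥ* meanMatrix n k p q cl) ᵥ* M) := by
      rw [row_mul, vecMul_smul, vecMul_add, ← vecMul_vecMul, ← vecMul_vecMul, ← row_mul, pow_succ M (m + 1)]
    rw [hrow, enorm_smul]
    have hg : ∀ j : ℕ, ((j + 1 : ℕ) : ℝ) ≤ l + 1 →
        enorm ((M ^ (j + 1)) u ᵥ* meanMatrix n k p q cl) ≤
          lam ⟨0, hn⟩ * (300 * l * Q * T ^ j) := by
      intro j hj
      refine enorm_le_of_dot (by positivity) ?_
      refine (G_bound hn hq hpq hs hd _).trans ?_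
      rw [mul_pow]
      exact mul_le_mul_of_nonneg_left (hβ j hj u) (sq_nonneg _)
    have h1 := hg (m + 1) hm2
    have h2 := hg m hm1
    have h3 := enorm_vecMul_le hM ((M ^ (m + 1)) u ᵥ* meanMatrix n k p q cl)
    have h4 : specNorm M * enorm ((M ^ (m + 1)) u ᵥ* meanMatrix n k p q cl) ≤
        150 * T * (lam ⟨0, hn⟩ * (300 * l * Q * T ^ m)) :=
      mul_le_mul hnorm h2 (enorm_nonneg' _) (by positivity)
    have h5 := enorm_add_le ((M ^ (m + 1 + 1)) u ᵥ* meanMatrix n k p q cl)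
      (((M ^ (m + 1)) u ᵥ* meanMatrix n k p q cl) ᵥ* M)
    have h6 : enorm (((M ^ (m + 1 + 1)) u ᵥ* meanMatrix n k p q cl) +
        ((M ^ (m + 1)) u ᵥ* meanMatrix n k p q cl) ᵥ* M) ≤
        (lam ⟨0, hn⟩ * μ) * (50000 * l * Q * T ^ m) := by
      have e : lam ⟨0, hn⟩ * (300 * l * Q * T ^ (m + 1)) +
          150 * T * (lam ⟨0, hn⟩ * (300 * l * Q * T ^ m)) =
          45300 * (lam ⟨0, hn⟩ * T * (l * Q * T ^ m)) := by rw [pow_succ]; ring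
      have e2 : lam ⟨0, hn⟩ * T * (l * Q * T ^ m) ≤ lam ⟨0, hn⟩ * μ * (l * Q * T ^ m) := by
        gcongr
      have e3 : 0 ≤ lam ⟨0, hn⟩ * μ * (l * Q * T ^ m) := by positivity
      linarith
    rw [abs_neg, abs_of_pos (by positivity), one_div, inv_mul_le_iff₀ (by positivity)]
    exact h6
  · refine n2i_le hn fun u => ?_
    refine le_trans ?_ hfin
    rw [row_mul]
    have : 50000 * l * Q * T ^ m = 50000 * (l * Q * T ^ m) := by ring
    rw [this]
    refine enorm_le_of_dot (by positivity) ?_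
    refine (psi_bound hn hq hpq hs hμ hB hd _).trans ?_
    have h1 := hβ m hm1 u
    have e : (50000 * (l * Q * T ^ m)) ^ 2 = 2500000000 * (l * Q * T ^ m) ^ 2 := by ring
    have e2 : (300 * l * Q * T ^ m) ^ 2 = 90000 * (l * Q * T ^ m) ^ 2 := by ring
    rw [e]; rw [e2] at h1
    linarith [sq_nonneg (l * Q * T ^ m)]

end Det

end SBM

namespace SBM

lemma log_ge_four {x : ℝ} (hx : 100 ≤ x) : 4 ≤ Real.log x := by
  rw [Real.le_log_iff_exp_le (by linarith)]
  have h : Real.exp 4 = Real.exp 1 ^ 4 := by rw [← Real.exp_nat_mul]; norm_num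
  rw [h]
  have := Real.exp_one_lt_d9
  calc Real.exp 1 ^ 4 ≤ 2.7182818286 ^ 4 := by gcongr
    _ ≤ 100 := by norm_num
    _ ≤ x := hx

end SBM

open SBM in
/-- There are constants `C, c > 0` such that: if the partition is
balanced, `k ≥ 2` and `n ≥ C·k²·p·(log n)¹²/(p−q)²`, then with probability at least
`1 − c·n^{−2}` over `E`, for every `1 ≤ η ≤ log n`:
`‖E^η·L‖_{2→∞} ≤ 10⁶·√(kp)·(100√(np))^{η−1}·(log n)^{5η}` and likewise for `E^η·ψ(G)`,
where `L = A·(EG + GE)`. -/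
theorem E_pow_L_and_psi_bound :
    ∃ C > (0 : ℝ), ∃ c > (0 : ℝ),
      ∀ (n k : ℕ) (hn : 0 < n) (hk : 2 ≤ k)
        (p q : ℝ) (hq : 0 ≤ q) (hpq : q < p) (hp : p ≤ 1)
        (cl : Fin n → Fin k) (hbal : Balanced n k cl)
        (hsize : (n : ℝ) ≥ C * k ^ 2 * p * (Real.log n) ^ 12 / (p - q) ^ 2)
        (lamG : Fin n → ℝ) (vG : Fin n → Fin n → ℝ)
        (hdecG : IsSpectralDecomp (meanMatrix n k p q cl) lamG vG)
        (Ω : Type) (_ : MeasureSpace Ω) (_ : IsProbabilityMeasure (ℙ : Measure Ω))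
        (E : Ω → Matrix (Fin n) (Fin n) ℝ) (hE : NoiseModel p q cl E),
        ENNReal.ofReal (1 - c / (n : ℝ) ^ 2) ≤
          ℙ {ω : Ω |
            ∀ η : ℕ, 1 ≤ η → (η : ℝ) ≤ Real.log n →
              n2i (E ω ^ η *
                  ((-(1 / (lamG ⟨0, hn⟩ * ((p - q) * ((n : ℝ) / k))))) •
                    (E ω * meanMatrix n k p q cl + meanMatrix n k p q cl * E ω))) ≤
                1000000 * Real.sqrt ((k : ℝ) * p) *
                  (100 * Real.sqrt ((n : ℝ) * p)) ^ (η - 1) *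
                  (Real.log n) ^ (5 * η) ∧
              n2i (E ω ^ η *
                  psiM (lamG ⟨0, hn⟩) ((p - q) * ((n : ℝ) / k)) (meanMatrix n k p q cl)) ≤
                1000000 * Real.sqrt ((k : ℝ) * p) *
                  (100 * Real.sqrt ((n : ℝ) * p)) ^ (η - 1) *
                  (Real.log n) ^ (5 * η)} := by
  refine ⟨1000000, by norm_num, 10000, by norm_num, ?_⟩
  intro n k hn hk p q hq hpq hp cl hbal hsize lamG vG hdecG Ω _ _ E hE
  have hn0 : (0 : ℝ) < n := by exact_mod_cast hn
  by_cases hbig : n < 100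
  · rw [ENNReal.ofReal_of_nonpos]
    · exact zero_le
    · rw [sub_nonpos, le_div_iff₀ (by positivity)]
      have : (n : ℝ) ≤ 100 := by exact_mod_cast hbig.le
      nlinarith
  have hn100 : (100 : ℝ) ≤ n := by exact_mod_cast not_lt.1 hbig
  have hL : 4 ≤ Real.log n := log_ge_four hn100
  have hp0 : 0 < p := by linarith
  have hpq' : 0 < p - q := by linarith
  have hk2 : (2 : ℝ) ≤ k := by exact_mod_cast hk
  have hk0 : (0 : ℝ) < k := by linarith
  set l := Real.log n with hl
  have hL12 : l ^ 2 ≤ l ^ 12 := pow_le_pow_right₀ (by linarith) (by norm_num)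
  have hsz : 1000000 * k ^ 2 * p * l ^ 2 ≤ n * (p - q) ^ 2 := by
    have h1 : 1000000 * (k : ℝ) ^ 2 * p * l ^ 12 ≤ n * (p - q) ^ 2 :=
      (div_le_iff₀ (by positivity)).1 hsize
    refine le_trans ?_ h1
    gcongr
  have hnp : 1000000 * (k : ℝ) ^ 2 * l ^ 2 ≤ n * p := by
    have h1 : (p - q) ^ 2 ≤ p ^ 2 := by gcongr; linarith
    have h2 : (1000000 * (k : ℝ) ^ 2 * l ^ 2) * p ≤ (n * p) * p := by
      calc _ = 1000000 * k ^ 2 * p * l ^ 2 := by ring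
        _ ≤ n * (p - q) ^ 2 := hsz
        _ ≤ n * p ^ 2 := by gcongr
        _ = _ := by ring
    exact le_of_mul_le_mul_right h2 hp0
  have hl1 : 1 ≤ l ^ 2 := one_le_pow₀ (by linarith)
  have hkn : (k : ℝ) ≤ n := by
    have h1 : (k : ℝ) ≤ 1000000 * (k : ℝ) ^ 2 * l ^ 2 := by nlinarith [sq_nonneg (k : ℝ)]
    have h2 : (n : ℝ) * p ≤ n := mul_le_of_le_one_right hn0.le hp
    linarith
  have hT : 36 * l ^ 2 * (n * p) ≤ ((p - q) * ((n : ℝ) / k)) ^ 2 := by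
    have e : ((p - q) * ((n : ℝ) / k)) ^ 2 = (n * (p - q) ^ 2) * n / k ^ 2 := by
      field_simp
    rw [e, le_div_iff₀ (by positivity)]
    have : (36 * k ^ 2 * p * l ^ 2) * n ≤ (n * (p - q) ^ 2) * n := by
      refine mul_le_mul_of_nonneg_right (le_trans ?_ hsz) hn0.le
      gcongr; norm_num
    linarith
  set I : Finset ℕ := (Finset.range (n + 1)).filter
    (fun η => 0 < η ∧ (η : ℝ) ≤ l + 1) with hI
  have hIcard : ((#I : ℕ) : ℝ) ≤ n + 1 := by
    have : #I ≤ n + 1 := (Finset.card_filter_le _ _).trans (by simp)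
    exact_mod_cast this
  have hIlog : l + 1 ≤ n := by
    have := Real.log_le_sub_one_of_pos hn0
    linarith
  have hImem : ∀ η : ℕ, 0 < η → (η : ℝ) ≤ l + 1 → η ∈ I := by
    intro η h0 h1
    rw [hI, Finset.mem_filter, Finset.mem_range]
    refine ⟨?_, h0, h1⟩
    have : (η : ℝ) ≤ n := h1.trans hIlog
    have : η ≤ n := by exact_mod_cast this
    omega
  set ρ : Fin n → Fin k → ℝ := fun u c => if c = cl u then (1 : ℝ) else 2 / (k : ℝ) with hρ
  set b1 : ℕ × Fin n × Fin k → Set Ω := fun i =>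
    {ω | Real.exp 6 * (36 * l ^ 2 * (n * p)) ^ i.1 * ρ i.2.1 i.2.2 <
      ((E ω ^ i.1 *ᵥ ind (cset cl i.2.2)) i.2.1) ^ 2} with hb1
  set b2 : ℕ × Fin n × Fin n → Set Ω := fun i =>
    {ω | Real.exp 6 * (36 * l ^ 2 * (n * p)) ^ i.1 * 1 <
      ((E ω ^ i.1 *ᵥ ind {i.2.2}) i.2.1) ^ 2} with hb2
  have hsimple : 4 * l ^ 2 ≤ 1 * (n * p) := by
    have : 4 * l ^ 2 ≤ 1000000 * (k : ℝ) ^ 2 * l ^ 2 := by gcongr; nlinarith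
    linarith
  have hprob1 : ∀ i ∈ I ×ˢ (univ : Finset (Fin n × Fin k)),
      (ℙ : Measure Ω).real (b1 i) ≤ 1 / (n : ℝ) ^ 6 := by
    rintro ⟨η, u, c⟩ hi
    have hη := (Finset.mem_filter.1 (Finset.mem_product.1 hi).1).2
    by_cases hc : c = cl u
    · have e : ρ u c = 1 := by simp [hρ, hc]
      simp only [hb1, e]
      refine tail hn hq hpq hp hE hL u _ one_pos le_rfl ?_ (Or.inl rfl) η hη.1 hη.2 hsimple
      have : #(cset cl c) ≤ n := (Finset.card_le_univ _).trans (by simp)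
      rw [one_mul]; exact_mod_cast this
    · have e : ρ u c = 2 / k := by simp [hρ, hc]
      simp only [hb1, e]
      refine tail hn hq hpq hp hE hL u _ (by positivity) ?_ ?_ (Or.inr ?_) η hη.1 hη.2 ?_
      · rw [div_le_one hk0]; exact hk2
      · have h1 : ((#(cset cl c) : ℕ) : ℝ) ≤ (1 + 1 / (16 * l)) * ((n : ℝ) / k) := (hbal c).2
        have hε : 1 / (16 * l) ≤ 1 / 1 := by
          apply one_div_le_one_div_of_le <;> linarith
        have h2 : (1 + 1 / (16 * l)) * ((n : ℝ) / k) ≤ 2 * ((n : ℝ) / k) :=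
          mul_le_mul_of_nonneg_right (by linarith) (by positivity)
        have h3 : 2 / (k : ℝ) * n = 2 * ((n : ℝ) / k) := by ring
        linarith
      · simp only [cset, Finset.mem_filter, Finset.mem_univ, true_and]
        exact fun h => hc h.symm
      · rw [div_mul_eq_mul_div, le_div_iff₀ hk0]
        have : 4 * l ^ 2 * k ≤ 1000000 * (k : ℝ) ^ 2 * l ^ 2 := by
          have : 4 * (k : ℝ) ≤ 1000000 * (k : ℝ) ^ 2 := by nlinarith
          nlinarith
        have : 0 ≤ (n : ℝ) * p := by positivity
        linarith
  have hprob2 : ∀ i ∈ I ×ˢ (univ : Finset (Fin n × Fin n)),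
      (ℙ : Measure Ω).real (b2 i) ≤ 1 / (n : ℝ) ^ 6 := by
    rintro ⟨η, u, w⟩ hi
    have hη := (Finset.mem_filter.1 (Finset.mem_product.1 hi).1).2
    refine tail hn hq hpq hp hE hL u _ one_pos le_rfl ?_ (Or.inl rfl) η hη.1 hη.2 hsimple
    simp; omega
  set B1 : Set Ω := ⋃ i ∈ I ×ˢ (univ : Finset (Fin n × Fin k)), b1 i with hB1
  set B2 : Set Ω := ⋃ i ∈ I ×ˢ (univ : Finset (Fin n × Fin n)), b2 i with hB2
  have hP1 : (ℙ : Measure Ω).real B1 ≤ 2 / (n : ℝ) ^ 3 := by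
    refine (measureReal_biUnion_finset_le _ _).trans ((Finset.sum_le_sum hprob1).trans ?_)
    rw [Finset.sum_const, nsmul_eq_mul, Finset.card_product, Finset.card_univ, Fintype.card_prod,
      Fintype.card_fin, Fintype.card_fin]
    push_cast
    have : ((#I : ℕ) : ℝ) * (n * k) ≤ (2 * n) * (n * n) := by
      gcongr; linarith
    calc _ ≤ (2 * (n : ℝ)) * (n * n) * (1 / (n : ℝ) ^ 6) := by gcongr
      _ = _ := by field_simp
  have hP2 : (ℙ : Measure Ω).real B2 ≤ 2 / (n : ℝ) ^ 3 := by
    refine (measureReal_biUnion_finset_le _ _).trans ((Finset.sum_le_sum hprob2).trans ?_)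
    rw [Finset.sum_const, nsmul_eq_mul, Finset.card_product, Finset.card_univ, Fintype.card_prod,
      Fintype.card_fin]
    push_cast
    have : ((#I : ℕ) : ℝ) * (n * n) ≤ (2 * n) * (n * n) := by
      gcongr; linarith
    calc _ ≤ (2 * (n : ℝ)) * (n * n) * (1 / (n : ℝ) ^ 6) := by gcongr
      _ = _ := by field_simp
  have hcover : ∀ A : Set Ω, (B1 ∪ B2)ᶜ ⊆ A →
      ENNReal.ofReal (1 - 10000 / (n : ℝ) ^ 2) ≤ ℙ A := by
    intro A hA
    rw [← ofReal_measureReal (measure_ne_top _ _)]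
    apply ENNReal.ofReal_le_ofReal
    have h1 : (ℙ : Measure Ω).real Set.univ = 1 := by simp
    have h2 : (Set.univ : Set Ω) ⊆ A ∪ (B1 ∪ B2) := by
      intro ω _
      by_cases h : ω ∈ B1 ∪ B2
      · exact Or.inr h
      · exact Or.inl (hA h)
    have h3 : (ℙ : Measure Ω).real Set.univ ≤ (ℙ : Measure Ω).real (A ∪ (B1 ∪ B2)) :=
      measureReal_mono h2
    have h4 := measureReal_union_le (μ := (ℙ : Measure Ω)) A (B1 ∪ B2)
    have h5 := measureReal_union_le (μ := (ℙ : Measure Ω)) B1 B2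
    have h6 : 2 / (n : ℝ) ^ 3 + 2 / (n : ℝ) ^ 3 ≤ 10000 / (n : ℝ) ^ 2 := by
      rw [← add_div, div_le_div_iff₀ (by positivity) (by positivity)]
      have : 0 ≤ (n : ℝ) ^ 2 := by positivity
      nlinarith
    linarith
  apply hcover
  intro ω hω
  rw [Set.mem_compl_iff, Set.mem_union, not_or] at hω
  have hX : ∀ η : ℕ, 0 < η → (η : ℝ) ≤ Real.log n + 1 → ∀ u c,
      ((E ω ^ η *ᵥ ind (cset cl c)) u) ^ 2 ≤ Real.exp 6 * (36 * Real.log n ^ 2 * (n * p)) ^ η *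
        (if c = cl u then (1 : ℝ) else 2 / (k : ℝ)) := by
    intro η h0 h1 u c
    by_contra hcon
    refine hω.1 (Set.mem_iUnion₂.2 ⟨(η, u, c), ?_, not_le.1 hcon⟩)
    exact Finset.mem_product.2 ⟨hImem η h0 h1, Finset.mem_univ _⟩
  have hY : ∀ η : ℕ, 0 < η → (η : ℝ) ≤ Real.log n + 1 → ∀ u w,
      ((E ω ^ η) u w) ^ 2 ≤ Real.exp 6 * (36 * Real.log n ^ 2 * (n * p)) ^ η := by
    intro η h0 h1 u w
    by_contra hcon
    refine hω.2 (Set.mem_iUnion₂.2 ⟨(η, u, w), ?_, ?_⟩)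
    · exact Finset.mem_product.2 ⟨hImem η h0 h1, Finset.mem_univ _⟩
    · have e : (E ω ^ η *ᵥ ind {w}) u = (E ω ^ η) u w := by
        simp [mulVec, dotProduct, ind]
      simp only [hb2, Set.mem_ofPred_eq, e, mul_one]
      exact not_le.1 hcon
  intro η hη hηL
  exact det_bound hk hn hq hpq hbal hL hdecG hT (hE.1 ω) hX hY η hη hηL
end
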